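/- arXiv:2204.05014 — 4 statements merged into one kernel-verified Lean document; each statement's English description precedes it below -/
import Mathlib

section
/- Let S(16) denote the set of all integer circulant determinants of order 16. Then S(16) equals the union of: the set of odd integers; the set 128ℤ; the set of all integers 64pm where m ∈ ℤ and p is a prime such that p ≡ 1 (mod 8) and p = a² + b² for some integers a, b with a + b ≡ 3 or 5 (mod 8); the set of all integers 64pm where m ∈ ℤ and p is a prime with p ≡ 5 (mod 8); and the set of all integers 64p²m where m ∈ ℤ and p is a prime with p ≡ 3 (mod 8). -/
open Complex Finset

noncomputable def zeta16 : ℂ := Complex.exp (2 * Real.pi * Complex.I / 16)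

noncomputable def fpoly (a : Fin 16 → ℤ) (x : ℂ) : ℂ := ∑ k : Fin 16, (a k : ℂ) * x ^ (k : ℕ)

noncomputable def Nprod (a : Fin 16 → ℤ) (d : ℕ) : ℂ :=
  ∏ l ∈ Finset.filter (fun l => Nat.gcd l 16 = d) (Finset.range 16), fpoly a (zeta16 ^ l)

def circMatrix (a : Fin 16 → ℤ) : Matrix (Fin 16) (Fin 16) ℤ := fun i j => a (i - j)

def S16 : Set ℤ := { n | ∃ a : Fin 16 → ℤ, n = (circMatrix a).det }

def bcoef (a : Fin 16 → ℤ) (k : Fin 16) : ℤ := (a k + a (k + 8)) + (a (k + 4) + a (k + 12))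
def ccoef (a : Fin 16 → ℤ) (k : Fin 16) : ℤ := (a k + a (k + 8)) - (a (k + 4) + a (k + 12))
def ecoef (a : Fin 16 → ℤ) (k : Fin 16) : ℤ := a k - a (k + 8)

/-!
Write `f = ∑ aₖ xᵏ`. The determinant is the product of `f` over the sixteenth roots of unity, that
is, `f(1) f(-1)` times the norms of `f(i)`, `f(ζ₈)` and `f(ζ₁₆)`; through the relative norms down to
`ℤ[i]` these three are norms of Gaussian integers `g₀`, `g₁`, `g₂`, whose real parts all have one
parity and whose imaginary parts all have one parity. The determinant is odd if the two parities
differ and divisible by `4 ^ 4` if both are even. If both are odd, then each `gⱼ` is `1 + i` times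
a Gaussian integer of odd norm. When no admissible factor (`p` or `p ^ 2` as in the theorem) divides
that norm, all Gaussian primes dividing `gⱼ / (1 + i)` are congruent to units modulo `4 + 4i`, which
makes the squares of the real and imaginary parts of `gⱼ` congruent to `1` modulo `16`. If this
holds for all three, then comparing coefficients modulo `4` shows that `16`, rather than just `8`,
divides `f(1) f(-1)`, so `128` divides the determinant.

Conversely, the determinants are closed under multiplication and contain the odd integers, so it
suffices to attain the multiples of `128` and `64 q` for each admissible factor `q`. For `p ≡ 5`
modulo `8`, writing `2 p` as a sum of two squares gives an explicit vector. In the other cases a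
family of vectors attains `32 N(z)` for `z` in `ℤ[ζ₈]` under a parity and a congruence condition. As
`-2` is a square modulo `p`, a Gaussian prime `π` dividing `p` is, up to a unit, the relative norm
of some `c` in the principal ideal domain `ℤ[ζ₈]`, and `z = (1 - ζ₈) c` satisfies the conditions
and has `N(z) = 2 N(π)`.
-/

section Circulant

open Matrix

theorem det_circulant_eq_prod {K : Type*} [CommRing K] [IsDomain K] {n : ℕ} [NeZero n] {ζ : K}
    (hζ : IsPrimitiveRoot ζ n) (a : Fin n → K) :
    (circulant a).det = ∏ i : Fin n, ∑ k : Fin n, a k * (ζ ^ (i : ℕ)) ^ (k : ℕ) := by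
  set v : Fin n → K := fun i => ζ ^ (i : ℕ)
  have pow_add_val (i k j : Fin n) :
      v i ^ ((k + j : Fin n) : ℕ) = v i ^ (k : ℕ) * v i ^ (j : ℕ) := by
    have hv : v i ^ n = 1 := by rw [← pow_mul, mul_comm, pow_mul, hζ.pow_eq_one, one_pow]
    rw [← pow_add, Fin.val_add, ← pow_eq_pow_mod _ hv]
  have diagonalize : vandermonde v * circulant a
      = diagonal (fun i => ∑ k, a k * v i ^ (k : ℕ)) * vandermonde v := by
    ext i j
    rw [diagonal_mul, mul_apply, Finset.sum_mul, ← Equiv.sum_comp (Equiv.addRight j)]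
    refine Finset.sum_congr rfl fun k _ => ?_
    simp only [vandermonde_apply, circulant_apply, Equiv.coe_addRight, add_sub_cancel_right,
      pow_add_val]
    ring
  have vandermonde_ne_zero : (vandermonde v).det ≠ 0 :=
    det_vandermonde_ne_zero_iff.2 fun i j h => Fin.ext (hζ.pow_inj i.2 j.2 h)
  have hdet := congrArg det diagonalize
  rw [det_mul, det_mul, det_diagonal, mul_comm] at hdet
  exact mul_right_cancel₀ vandermonde_ne_zero hdet

theorem prod_one_sub_pow_mul_eq_order {K : Type*} [CommRing K] [IsDomain K] {n r : ℕ} {ζ : K}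
    (hζ : IsPrimitiveRoot ζ (n + 1)) (hr : r.Coprime (n + 1)) :
    ∏ i ∈ range n, (1 - (ζ ^ (i + 1)) ^ r) = n + 1 := by
  rw [← (hζ.pow_of_coprime r hr).prod_one_sub_pow_eq_order]
  simp_rw [← pow_mul, mul_comm r]

theorem det_circulant_ite_lt_add_const {n r : ℕ} (hrn : r < n + 1) (hr : r.Coprime (n + 1))
    (m : ℤ) :
    (circulant fun k : Fin (n + 1) => (if (k : ℕ) < r then 1 else 0) + m).det
      = r + (n + 1) * m := by
  set a : Fin (n + 1) → ℤ := fun k => (if (k : ℕ) < r then 1 else 0) + m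
  set ζ : ℂ := exp (2 * Real.pi * I / (n + 1 : ℕ))
  have hζ : IsPrimitiveRoot ζ (n + 1) := Complex.isPrimitiveRoot_exp _ n.succ_ne_zero
  have value (x : ℂ) : ∑ k, (a k : ℂ) * x ^ (k : ℕ)
      = ∑ k ∈ range r, x ^ k + m * ∑ k ∈ range (n + 1), x ^ k := by
    have hfilter : (range (n + 1)).filter (· < r) = range r := by ext k; simp; omega
    rw [Fin.sum_univ_eq_sum_range (fun k => (((if k < r then 1 else 0) + m : ℤ) : ℂ) * x ^ k)]
    simp only [Int.cast_add, Int.cast_ite, Int.cast_one, Int.cast_zero, add_mul, ite_mul, one_mul,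
      zero_mul, sum_add_distrib, ← sum_filter, hfilter, mul_sum]
  have one_sub_mul_value (i : ℕ) (hi : i ∈ range n) :
      (1 - ζ ^ (i + 1)) * ∑ k, (a k : ℂ) * (ζ ^ (i + 1)) ^ (k : ℕ) = 1 - (ζ ^ (i + 1)) ^ r := by
    have hne : 1 - ζ ^ (i + 1) ≠ 0 :=
      sub_ne_zero.2 (hζ.pow_ne_one_of_pos_of_lt i.succ_ne_zero (by simpa using hi)).symm
    have hzero : ∑ k ∈ range (n + 1), (ζ ^ (i + 1)) ^ k = 0 := by
      refine (mul_eq_zero.1 ?_).resolve_left hne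
      rw [mul_neg_geom_sum, ← pow_mul, mul_comm, pow_mul, hζ.pow_eq_one, one_pow, sub_self]
    rw [value, hzero, mul_zero, add_zero, mul_neg_geom_sum]
  have prod_value : ∏ i ∈ range n, ∑ k, (a k : ℂ) * (ζ ^ (i + 1)) ^ (k : ℕ) = 1 := by
    have hprod := prod_congr rfl one_sub_mul_value
    rw [prod_mul_distrib, hζ.prod_one_sub_pow_eq_order,
      prod_one_sub_pow_mul_eq_order hζ hr] at hprod
    exact mul_left_cancel₀ (Nat.cast_add_one_ne_zero n) (hprod.trans (mul_one _).symm)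
  refine Int.cast_injective (α := ℂ) ?_
  rw [Int.cast_det, map_circulant, det_circulant_eq_prod hζ,
    Fin.prod_univ_eq_prod_range (fun i => ∑ k, (a k : ℂ) * (ζ ^ i) ^ (k : ℕ)), prod_range_succ',
    prod_value, value]
  simp [mul_comm]

theorem exists_det_circulant_eq_of_isCoprime {n : ℕ} {d : ℤ} (hd : IsCoprime d (n + 1)) :
    ∃ a : Fin (n + 1) → ℤ, (circulant a).det = d := by
  obtain ⟨r, m, rfl, hrn⟩ : ∃ (r : ℕ) (m : ℤ), d = r + (n + 1) * m ∧ r < n + 1 := by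
    have hnonneg := Int.emod_nonneg d (b := n + 1) (by positivity)
    have hlt := Int.emod_lt_of_pos d (b := n + 1) (by positivity)
    refine ⟨(d % (n + 1)).toNat, d / (n + 1), ?_, by omega⟩
    rw [Int.toNat_of_nonneg hnonneg, Int.emod_add_mul_ediv]
  exact ⟨_, det_circulant_ite_lt_add_const hrn
    (Nat.isCoprime_iff_coprime.1 (by exact_mod_cast hd.of_add_mul_left_left)) m⟩

end Circulant

section QuadraticTower

open QuadraticAlgebra

/-- The ring `ℤ[ζ₈] = ℤ[i][√i]`; its `ω` is `ζ₈`. -/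
abbrev OcticInt : Type := QuadraticAlgebra GaussianInt Zsqrtd.sqrtd 0

/-- The ring `ℤ[ζ₁₆] = ℤ[ζ₈][√ζ₈]`; its `ω` is `ζ₁₆`. -/
abbrev HexadecicInt : Type := QuadraticAlgebra OcticInt ω 0

/-- The norm of `ℤ[ζ₈]` over `ℤ`. -/
def octicNorm : OcticInt →* ℤ := Zsqrtd.normMonoidHom.comp QuadraticAlgebra.norm

/-- Evaluation of an element of `R[√a]` at a candidate `x` for `√a`, given an evaluation `φ` of `R`.
The function is total, and multiplicative only if `φ` is and `x ^ 2 = φ a`. -/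
def quadEval {R S : Type*} [CommRing R] [CommRing S] {a : R} (φ : R → S) (x : S)
    (z : QuadraticAlgebra R a 0) : S :=
  φ z.re + φ z.im * x

section Eval

variable {S : Type*} [CommRing S]

/-- Evaluation of a Gaussian integer at a candidate `x` for `i`. -/
def gaussianEval (x : S) (z : GaussianInt) : S := z.re + z.im * x

/-- Evaluation of an element of `ℤ[ζ₈]` at a candidate `x` for `ζ₈`. -/
def octicEval (x : S) : OcticInt → S := quadEval (gaussianEval (x ^ 2)) x

/-- Evaluation of an element of `ℤ[ζ₁₆]` at a candidate `x` for `ζ₁₆`. -/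
def hexadecicEval (x : S) : HexadecicInt → S := quadEval (octicEval (x ^ 2)) x

theorem exists_ringHom_eq_quadEval {R : Type*} [CommRing R] {a : R} (φ : R →+* S) {x : S}
    (hx : x ^ 2 = φ a) : ∃ ψ : QuadraticAlgebra R a 0 →+* S, ⇑ψ = quadEval φ x :=
  ⟨{ toFun := quadEval φ x
     map_one' := by simp [quadEval]
     map_zero' := by simp [quadEval]
     map_add' := fun z w => by simp only [quadEval, re_add, im_add, map_add]; ring
     map_mul' := fun z w => by
      simp only [quadEval, re_mul, im_mul, map_add, map_mul, ← hx, zero_mul, add_zero]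
      ring }, rfl⟩

theorem quadEval_mul_quadEval_neg {R : Type*} [CommRing R] {a : R} (φ : R →+* S)
    {x : S} (hx : x ^ 2 = φ a) (z : QuadraticAlgebra R a 0) :
    quadEval φ x z * quadEval φ (-x) z = φ z.norm := by
  simp only [quadEval, QuadraticAlgebra.norm_def, map_sub, map_mul, ← hx, zero_mul,
    add_zero]
  ring

theorem exists_ringHom_eq_gaussianEval {x : S} (hx : x ^ 2 = -1) :
    ∃ φ : GaussianInt →+* S, ⇑φ = gaussianEval x :=
  ⟨Zsqrtd.lift ⟨x, by rw [← sq, hx]; simp⟩, by ext z; simp [gaussianEval]⟩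

theorem gaussianEval_mul_gaussianEval_neg {x : S} (hx : x ^ 2 = -1) (z : GaussianInt) :
    gaussianEval x z * gaussianEval (-x) z = z.norm := by
  simp only [gaussianEval, Zsqrtd.norm_def]
  push_cast
  linear_combination -(z.im : S) ^ 2 * hx

theorem exists_ringHom_eq_octicEval {x : S} (hx : x ^ 4 = -1) :
    ∃ φ : OcticInt →+* S, ⇑φ = octicEval x := by
  obtain ⟨φ, hφ⟩ := exists_ringHom_eq_gaussianEval (x := x ^ 2) (by rw [← pow_mul, hx])
  rw [octicEval, ← hφ]
  exact exists_ringHom_eq_quadEval φ (by simp [hφ, gaussianEval])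

theorem octicEval_mul_octicEval_neg {x : S} (hx : x ^ 4 = -1) (z : OcticInt) :
    octicEval x z * octicEval (-x) z = gaussianEval (x ^ 2) z.norm := by
  obtain ⟨φ, hφ⟩ := exists_ringHom_eq_gaussianEval (x := x ^ 2) (by rw [← pow_mul, hx])
  rw [octicEval, octicEval, neg_sq, ← hφ]
  exact quadEval_mul_quadEval_neg φ (by simp [hφ, gaussianEval]) z

theorem hexadecicEval_mul_hexadecicEval_neg {x : S} (hx : x ^ 8 = -1) (z : HexadecicInt) :
    hexadecicEval x z * hexadecicEval (-x) z = octicEval (x ^ 2) z.norm := by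
  obtain ⟨φ, hφ⟩ := exists_ringHom_eq_octicEval (x := x ^ 2) (by rw [← pow_mul, hx])
  rw [hexadecicEval, hexadecicEval, neg_sq, ← hφ]
  exact quadEval_mul_quadEval_neg φ (by simp [hφ, octicEval, quadEval, gaussianEval]) z

end Eval

end QuadraticTower

section RootProducts

variable {S : Type*} [CommRing S]

theorem prod_pow_range_two_mul (F : S → S) (ζ : S) (m : ℕ) :
    ∏ i ∈ range (2 * m), F (ζ ^ i) =
      (∏ i ∈ range m, F ((ζ ^ 2) ^ i)) * ∏ i ∈ range m, F (ζ ^ (2 * i + 1)) := by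
  induction m with
  | zero => simp
  | succ m ih =>
    rw [mul_add_one, prod_range_succ, prod_range_succ, ih, prod_range_succ, prod_range_succ,
      ← pow_mul]
    ring

theorem prod_odd_pow_range_two_mul {F G : S → S} {ζ : S} {m : ℕ} (hζ : ζ ^ (2 * m) = -1)
    (hFG : ∀ x, x ^ (2 * m) = -1 → F x * F (-x) = G (x ^ 2)) :
    ∏ i ∈ range (2 * m), F (ζ ^ (2 * i + 1)) = ∏ i ∈ range m, G ((ζ ^ 2) ^ (2 * i + 1)) := by
  rw [two_mul, prod_range_add, ← prod_mul_distrib]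
  refine prod_congr rfl fun i _ => ?_
  have hneg : ζ ^ (2 * (m + i) + 1) = -ζ ^ (2 * i + 1) := by
    rw [show 2 * (m + i) + 1 = 2 * m + (2 * i + 1) by ring, pow_add, hζ, neg_one_mul]
  have hroot : (ζ ^ (2 * i + 1)) ^ (2 * m) = -1 := by
    rw [pow_right_comm, hζ, Odd.neg_one_pow ⟨i, rfl⟩]
  rw [hneg, hFG _ hroot, pow_right_comm]

theorem prod_gaussianEval {ζ : S} (hζ : ζ ^ 2 = -1) (z : GaussianInt) :
    ∏ i ∈ range 2, gaussianEval (ζ ^ (2 * i + 1)) z = z.norm := by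
  simpa using prod_odd_pow_range_two_mul (m := 1) (G := fun _ => (z.norm : S)) hζ
    fun x hx => gaussianEval_mul_gaussianEval_neg hx z

theorem prod_octicEval {ζ : S} (hζ : ζ ^ 4 = -1) (z : OcticInt) :
    ∏ i ∈ range 4, octicEval (ζ ^ (2 * i + 1)) z = octicNorm z :=
  (prod_odd_pow_range_two_mul (m := 2) (G := (gaussianEval · z.norm)) hζ
    fun _ hx => octicEval_mul_octicEval_neg hx z).trans
    (prod_gaussianEval (by rw [← pow_mul, hζ]) _)

theorem prod_hexadecicEval {ζ : S} (hζ : ζ ^ 8 = -1) (z : HexadecicInt) :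
    ∏ i ∈ range 8, hexadecicEval (ζ ^ (2 * i + 1)) z = octicNorm z.norm :=
  (prod_odd_pow_range_two_mul (m := 4) (G := (octicEval · z.norm)) hζ
    fun _ hx => hexadecicEval_mul_hexadecicEval_neg hx z).trans
    (prod_octicEval (by rw [← pow_mul, hζ]) _)

end RootProducts

section CirculantFactors

/-- The value `f(i)` of `f = ∑ aₖ xᵏ`. -/
def gaussianValue (a : Fin 16 → ℤ) : GaussianInt :=
  ⟨bcoef a 0 - bcoef a 2, bcoef a 1 - bcoef a 3⟩

/-- The value `f(ζ₈)` of `f = ∑ aₖ xᵏ`. -/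
def octicValue (a : Fin 16 → ℤ) : OcticInt :=
  ⟨⟨ccoef a 0, ccoef a 2⟩, ⟨ccoef a 1, ccoef a 3⟩⟩

/-- The value `f(ζ₁₆)` of `f = ∑ aₖ xᵏ`. -/
def hexadecicValue (a : Fin 16 → ℤ) : HexadecicInt :=
  ⟨⟨⟨ecoef a 0, ecoef a 4⟩, ⟨ecoef a 2, ecoef a 6⟩⟩,
    ⟨⟨ecoef a 1, ecoef a 5⟩, ⟨ecoef a 3, ecoef a 7⟩⟩⟩

theorem fpoly_eq (a : Fin 16 → ℤ) (x : ℂ) :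
    fpoly a x = (a 0 : ℂ) + a 1 * x + a 2 * x ^ 2 + a 3 * x ^ 3 + a 4 * x ^ 4
      + a 5 * x ^ 5 + a 6 * x ^ 6 + a 7 * x ^ 7 + a 8 * x ^ 8 + a 9 * x ^ 9 + a 10 * x ^ 10
      + a 11 * x ^ 11 + a 12 * x ^ 12 + a 13 * x ^ 13 + a 14 * x ^ 14 + a 15 * x ^ 15 := by
  simp only [fpoly, Fin.sum_univ_succ, Fin.sum_univ_zero]
  simp [Fin.succ]
  ring

theorem fpoly_eq_of_pow_four_eq_one (a : Fin 16 → ℤ) {x : ℂ} (hx : x ^ 4 = 1) :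
    fpoly a x = bcoef a 0 + bcoef a 1 * x + bcoef a 2 * x ^ 2 + bcoef a 3 * x ^ 3 := by
  simp only [fpoly_eq, bcoef, Fin.isValue, Fin.reduceAdd]
  push_cast
  linear_combination ((a 4 + a 8 * (x ^ 4 + 1) + a 12 * (x ^ 8 + x ^ 4 + 1))
      + (a 5 + a 9 * (x ^ 4 + 1) + a 13 * (x ^ 8 + x ^ 4 + 1)) * x
      + (a 6 + a 10 * (x ^ 4 + 1) + a 14 * (x ^ 8 + x ^ 4 + 1)) * x ^ 2
      + (a 7 + a 11 * (x ^ 4 + 1) + a 15 * (x ^ 8 + x ^ 4 + 1)) * x ^ 3) * hx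

theorem fpoly_eq_gaussianEval (a : Fin 16 → ℤ) {x : ℂ} (hx : x ^ 2 = -1) :
    fpoly a x = gaussianEval x (gaussianValue a) := by
  rw [fpoly_eq_of_pow_four_eq_one a (by linear_combination (x ^ 2 - 1) * hx), gaussianEval,
    gaussianValue]
  push_cast
  linear_combination (bcoef a 2 + bcoef a 3 * x) * hx

theorem fpoly_eq_octicEval (a : Fin 16 → ℤ) {x : ℂ} (hx : x ^ 4 = -1) :
    fpoly a x = octicEval x (octicValue a) := by
  simp only [fpoly_eq, octicEval, quadEval, gaussianEval, octicValue, ccoef, Fin.isValue,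
    Fin.reduceAdd]
  push_cast
  linear_combination ((a 4 + a 8 * (x ^ 4 - 1) + a 12 * (x ^ 8 - x ^ 4 + 1))
      + (a 5 + a 9 * (x ^ 4 - 1) + a 13 * (x ^ 8 - x ^ 4 + 1)) * x
      + (a 6 + a 10 * (x ^ 4 - 1) + a 14 * (x ^ 8 - x ^ 4 + 1)) * x ^ 2
      + (a 7 + a 11 * (x ^ 4 - 1) + a 15 * (x ^ 8 - x ^ 4 + 1)) * x ^ 3) * hx

theorem fpoly_eq_hexadecicEval (a : Fin 16 → ℤ) {x : ℂ} (hx : x ^ 8 = -1) :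
    fpoly a x = hexadecicEval x (hexadecicValue a) := by
  simp only [fpoly_eq, hexadecicEval, octicEval, quadEval, gaussianEval, hexadecicValue, ecoef,
    Fin.isValue, Fin.reduceAdd]
  push_cast
  linear_combination (a 8 + a 9 * x + a 10 * x ^ 2 + a 11 * x ^ 3 + a 12 * x ^ 4
      + a 13 * x ^ 5 + a 14 * x ^ 6 + a 15 * x ^ 7) * hx

theorem isPrimitiveRoot_zeta16 : IsPrimitiveRoot zeta16 16 := by
  simpa [zeta16] using Complex.isPrimitiveRoot_exp 16 (by norm_num)

theorem zeta16_pow_eight : zeta16 ^ 8 = -1 :=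
  (isPrimitiveRoot_zeta16.pow (b := 2) (by norm_num) rfl).eq_neg_one_of_two_right

theorem circMatrix_eq_circulant (a : Fin 16 → ℤ) : circMatrix a = Matrix.circulant a := rfl

theorem det_circMatrix_eq_prod_fpoly (a : Fin 16 → ℤ) :
    ((circMatrix a).det : ℂ) = ∏ i ∈ range 16, fpoly a (zeta16 ^ i) := by
  rw [circMatrix_eq_circulant, Int.cast_det, Matrix.map_circulant,
    det_circulant_eq_prod isPrimitiveRoot_zeta16, Fin.prod_univ_eq_prod_range
      (fun i => ∑ k, ((a k : ℤ) : ℂ) * (zeta16 ^ i) ^ (k : ℕ))]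
  rfl

theorem det_circMatrix (a : Fin 16 → ℤ) :
    (circMatrix a).det = ((bcoef a 0 + bcoef a 2) ^ 2 - (bcoef a 1 + bcoef a 3) ^ 2) *
      (gaussianValue a).norm * octicNorm (octicValue a) * octicNorm (hexadecicValue a).norm := by
  have h8 := zeta16_pow_eight
  have h4 : (zeta16 ^ 2) ^ 4 = -1 := by rw [← pow_mul, h8]
  have h2 : ((zeta16 ^ 2) ^ 2) ^ 2 = -1 := by rw [← pow_mul, ← pow_mul, h8]
  have odd_pow {ζ : ℂ} {n : ℕ} (hζ : ζ ^ n = -1) (i : ℕ) : (ζ ^ (2 * i + 1)) ^ n = -1 := by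
    rw [pow_right_comm, hζ, Odd.neg_one_pow ⟨i, rfl⟩]
  have real_factor : ∏ i ∈ range 2, fpoly a ((((zeta16 ^ 2) ^ 2) ^ 2) ^ i) =
      (bcoef a 0 + bcoef a 2) ^ 2 - (bcoef a 1 + bcoef a 3) ^ 2 := by
    rw [prod_range_succ, prod_range_one, h2, fpoly_eq_of_pow_four_eq_one a (by norm_num),
      fpoly_eq_of_pow_four_eq_one a (by norm_num)]
    ring
  have hdet := det_circMatrix_eq_prod_fpoly a
  rw [prod_pow_range_two_mul _ _ 8, prod_pow_range_two_mul _ _ 4, prod_pow_range_two_mul _ _ 2,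
    real_factor, prod_congr rfl fun i _ => fpoly_eq_gaussianEval a (odd_pow h2 i),
    prod_congr rfl fun i _ => fpoly_eq_octicEval a (odd_pow h4 i),
    prod_congr rfl fun i _ => fpoly_eq_hexadecicEval a (odd_pow h8 i),
    prod_gaussianEval h2, prod_octicEval h4, prod_hexadecicEval h8] at hdet
  exact_mod_cast hdet

end CirculantFactors

section GaussianResidues

/-- The elements of a ring that are congruent to a unit modulo the ideal `I`. -/
def unitResidues {R : Type*} [CommRing R] (I : Ideal R) : Submonoid R :=
  ((IsUnit.submonoid R).map (Ideal.Quotient.mk I)).comap (Ideal.Quotient.mk I)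

theorem mem_unitResidues_span_singleton {R : Type*} [CommRing R] {c w : R} :
    w ∈ unitResidues (Ideal.span {c}) ↔ ∃ u, IsUnit u ∧ c ∣ u - w := by
  simp [unitResidues, Ideal.Quotient.eq, Ideal.mem_span_singleton, IsUnit.mem_submonoid_iff]

theorem mem_unitResidues_of_isUnit {R : Type*} [CommRing R] {I : Ideal R} {u : R} (hu : IsUnit u) :
    u ∈ unitResidues I :=
  ⟨u, hu, rfl⟩

theorem sq_emod_sixteen (n : ℤ) : n ^ 2 % 16 = (n % 8) ^ 2 % 16 := by
  refine Int.modEq_iff_dvd.2 ⟨-(n % 8 * (n / 8) + 4 * (n / 8) ^ 2), ?_⟩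
  linear_combination (n + n % 8 + 8 * (n / 8)) * Int.emod_add_mul_ediv n 8

theorem sq_modEq_one_sixteen_iff {n : ℤ} : n ^ 2 ≡ 1 [ZMOD 16] ↔ n % 8 = 1 ∨ n % 8 = 7 := by
  rw [Int.ModEq, sq_emod_sixteen]
  have := Int.emod_nonneg n (b := 8) (by norm_num)
  have := Int.emod_lt_of_pos n (b := 8) (by norm_num)
  interval_cases n % 8 <;> simp

theorem sq_modEq_nine_sixteen_iff {n : ℤ} : n ^ 2 ≡ 9 [ZMOD 16] ↔ n % 8 = 3 ∨ n % 8 = 5 := by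
  rw [Int.ModEq, sq_emod_sixteen]
  have := Int.emod_nonneg n (b := 8) (by norm_num)
  have := Int.emod_lt_of_pos n (b := 8) (by norm_num)
  interval_cases n % 8 <;> simp

theorem gaussianInt_norm_eq (g : GaussianInt) : g.norm = g.re ^ 2 + g.im ^ 2 := by
  rw [Zsqrtd.norm_def]
  ring

theorem isUnit_iff_re_sq_add_im_sq {u : GaussianInt} : IsUnit u ↔ u.re ^ 2 + u.im ^ 2 = 1 := by
  rw [← Zsqrtd.norm_eq_one_iff' (by norm_num), gaussianInt_norm_eq]

theorem re_mul_im_eq_zero_of_isUnit {u : GaussianInt} (hu : IsUnit u) : u.re * u.im = 0 := by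
  rw [isUnit_iff_re_sq_add_im_sq] at hu
  nlinarith [sq_nonneg (u.re + u.im), sq_nonneg (u.re - u.im)]

theorem sq_add_im_modEq_one_of_mem_unitResidues {w : GaussianInt}
    (hw : w ∈ unitResidues (Ideal.span {(⟨4, 4⟩ : GaussianInt)})) :
    (w.re + w.im) ^ 2 ≡ 1 [ZMOD 16] ∧ (w.re - w.im) ^ 2 ≡ 1 [ZMOD 16] := by
  obtain ⟨u, hu, v, hv⟩ := mem_unitResidues_span_singleton.1 hw
  have hre : w.re = u.re - 4 * v.re + 4 * v.im := by
    have := congrArg Zsqrtd.re hv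
    simp at this
    linarith
  have him : w.im = u.im - 4 * v.re - 4 * v.im := by
    have := congrArg Zsqrtd.im hv
    simp at this
    linarith
  have hmul := re_mul_im_eq_zero_of_isUnit hu
  rw [isUnit_iff_re_sq_add_im_sq] at hu
  rw [hre, him]
  constructor <;> rw [Int.modEq_iff_dvd]
  · exact ⟨v.re * (u.re + u.im) - 4 * v.re ^ 2, by linear_combination -hu - 2 * hmul⟩
  · exact ⟨-v.im * (u.re - u.im) - 4 * v.im ^ 2, by linear_combination -hu + 2 * hmul⟩

theorem mem_unitResidues_of_sq_add_im_modEq_one {w : GaussianInt}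
    (hadd : (w.re + w.im) ^ 2 ≡ 1 [ZMOD 16]) (hsub : (w.re - w.im) ^ 2 ≡ 1 [ZMOD 16]) :
    w ∈ unitResidues (Ideal.span {(⟨4, 4⟩ : GaussianInt)}) := by
  have sign {n : ℤ} (hn : n ^ 2 ≡ 1 [ZMOD 16]) : ∃ ε k : ℤ, (ε = 1 ∨ ε = -1) ∧ n = ε + 8 * k := by
    rcases sq_modEq_one_sixteen_iff.1 hn with h | h
    · exact ⟨1, n / 8, by omega, by omega⟩
    · exact ⟨-1, (n + 1) / 8, by omega, by omega⟩
  obtain ⟨ε, k, hε, hk⟩ := sign hadd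
  obtain ⟨δ, l, hδ, hl⟩ := sign hsub
  refine mem_unitResidues_span_singleton.2 ⟨⟨(ε + δ) / 2, (ε - δ) / 2⟩, ?_, ⟨-k, l⟩, ?_⟩
  · rw [isUnit_iff_re_sq_add_im_sq]
    rcases hε with rfl | rfl <;> rcases hδ with rfl | rfl <;> simp
  · ext <;> simp <;> omega

theorem exists_nat_prime_dvd_of_prime {π : GaussianInt} (hπ : Prime π) :
    ∃ p : ℕ, p.Prime ∧ π ∣ p := by
  have hn : π.norm.natAbs ≠ 0 := by
    simpa [Zsqrtd.norm_eq_zero] using hπ.ne_zero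
  have hdvd : π ∣ ((π.norm.natAbs.primeFactorsList.map (Nat.cast : ℕ → GaussianInt)).prod) := by
    rw [← Nat.cast_list_prod, Nat.prod_primeFactorsList hn]
    refine ⟨star π, ?_⟩
    rw [← Zsqrtd.norm_eq_mul_conj, ← Int.cast_natCast, GaussianInt.abs_natCast_norm]
  obtain ⟨x, hx, hπx⟩ := hπ.dvd_prod_iff.1 hdvd
  obtain ⟨p, hp, rfl⟩ := List.mem_map.1 hx
  exact ⟨p, Nat.prime_of_mem_primeFactorsList hp, hπx⟩

theorem exists_nat_prime_norm_eq_or_associated {π : GaussianInt} (hπ : Prime π) :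
    ∃ p : ℕ, p.Prime ∧ (π.norm = p ∨ p % 4 = 3 ∧ Associated π p) := by
  obtain ⟨p, hp, hπp⟩ := exists_nat_prime_dvd_of_prime hπ
  have := Fact.mk hp
  refine ⟨p, hp, ?_⟩
  by_cases hp4 : p % 4 = 3
  · exact .inr ⟨hp4, hπ.associated_of_dvd
      (GaussianInt.prime_of_nat_prime_of_mod_four_eq_three p hp4) hπp⟩
  obtain ⟨a, b, hab⟩ := Nat.Prime.sq_add_sq hp4
  have hab' : (p : ℤ) = a ^ 2 + b ^ 2 := by exact_mod_cast hab.symm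
  have hfactor : (p : GaussianInt) = ⟨a, b⟩ * ⟨a, -b⟩ := by
    ext
    · simp [hab', sq]
    · simp [mul_comm]
  have hnorm : π.norm ∣ p := by
    have key : ∀ w : GaussianInt, π ∣ w → w.norm = p → π.norm ∣ p := fun w h hw =>
      hw ▸ map_dvd Zsqrtd.normMonoidHom h
    rcases hπ.dvd_or_dvd (hfactor ▸ hπp) with h | h
    · exact key _ h (by simp [gaussianInt_norm_eq, hab'])
    · exact key _ h (by simp [gaussianInt_norm_eq, hab'])
  have := (Nat.dvd_prime hp).1 (Int.natAbs_dvd_natAbs.2 hnorm)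
  rw [Zsqrtd.norm_eq_one_iff] at this
  left
  rw [← GaussianInt.abs_natCast_norm, this.resolve_left hπ.not_isUnit]

/-- The minimal factors: an odd multiple `64 n` of 64 is a circulant determinant of order 16 exactly
when one of them divides `n`. -/
inductive IsAdmissibleFactor : ℤ → Prop
  | one_mod_eight {p : ℕ} {a b : ℤ} (hp : p.Prime) (hp8 : p % 8 = 1) (hab : (p : ℤ) = a ^ 2 + b ^ 2)
      (h : a + b ≡ 3 [ZMOD 8] ∨ a + b ≡ 5 [ZMOD 8]) : IsAdmissibleFactor p
  | five_mod_eight {p : ℕ} (hp : p.Prime) (hp8 : p % 8 = 5) : IsAdmissibleFactor p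
  | three_mod_eight {p : ℕ} (hp : p.Prime) (hp8 : p % 8 = 3) : IsAdmissibleFactor ((p : ℤ) ^ 2)

theorem mem_unitResidues_of_norm_prime {π : GaussianInt} {p : ℕ} (hp : p.Prime)
    (hπ : π.norm = p) (hodd : Odd π.norm) (hadm : ∀ q, IsAdmissibleFactor q → ¬ q ∣ π.norm) :
    π ∈ unitResidues (Ideal.span {(⟨4, 4⟩ : GaussianInt)}) := by
  have hsq : (p : ℤ) = π.re ^ 2 + π.im ^ 2 := by rw [← hπ, gaussianInt_norm_eq]
  have hparity : Odd (π.re + π.im) := by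
    have : Odd (π.re ^ 2 + π.im ^ 2) := by rwa [← hsq, ← hπ]
    simpa [Int.odd_add, parity_simps] using this
  have hp4 : p % 8 = 1 ∨ p % 8 = 5 := by
    have hS := Int.eight_dvd_sq_sub_one_of_odd hparity
    have hD := Int.eight_dvd_sq_sub_one_of_odd (hparity.sub_even (even_two_mul π.im))
    have : 2 * (p : ℤ) - 2
        = ((π.re + π.im) ^ 2 - 1) + ((π.re + π.im - 2 * π.im) ^ 2 - 1) := by rw [hsq]; ring
    omega
  have hp8 : p % 8 = 1 := hp4.resolve_right fun h => hadm _ (.five_mod_eight hp h) hπ.symm.dvd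
  have hadd : (π.re + π.im) ^ 2 ≡ 1 [ZMOD 16] := by
    rw [sq_modEq_one_sixteen_iff]
    by_contra h
    refine hadm _ (.one_mod_eight hp hp8 hsq ?_) hπ.symm.dvd
    rw [Int.ModEq, Int.ModEq]
    have := Int.odd_iff.1 hparity
    omega
  refine mem_unitResidues_of_sq_add_im_modEq_one hadd ?_
  have : (π.re - π.im) ^ 2 = 2 * p - (π.re + π.im) ^ 2 := by rw [hsq]; ring
  rw [this]
  rw [Int.ModEq] at hadd ⊢
  omega

theorem mem_unitResidues_of_associated_prime {π : GaussianInt} {p : ℕ} (hp : p.Prime)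
    (hp4 : p % 4 = 3) (hπ : Associated π p) (hadm : ∀ q, IsAdmissibleFactor q → ¬ q ∣ π.norm) :
    π ∈ unitResidues (Ideal.span {(⟨4, 4⟩ : GaussianInt)}) := by
  have hnorm : (p : ℤ) ^ 2 ∣ π.norm := by
    have := map_dvd Zsqrtd.normMonoidHom hπ.symm.dvd
    simpa [Zsqrtd.normMonoidHom, Zsqrtd.norm_natCast, ← sq] using this
  have hp8 : p % 8 = 7 := by
    have : p % 8 ≠ 3 := fun h => hadm _ (.three_mod_eight hp h) hnorm
    omega
  have hsq : (p : ℤ) ^ 2 ≡ 1 [ZMOD 16] := sq_modEq_one_sixteen_iff.2 (by omega)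
  obtain ⟨u, rfl⟩ := hπ.symm
  exact mul_mem
    (mem_unitResidues_of_sq_add_im_modEq_one (by simpa using hsq) (by simpa using hsq))
    (mem_unitResidues_of_isUnit u.isUnit)

theorem mem_unitResidues_of_not_dvd_norm {w : GaussianInt} (hodd : Odd w.norm)
    (hadm : ∀ q, IsAdmissibleFactor q → ¬ q ∣ w.norm) :
    w ∈ unitResidues (Ideal.span {(⟨4, 4⟩ : GaussianInt)}) := by
  induction w using UniqueFactorizationMonoid.induction_on_prime with
  | h₁ => simp at hodd
  | h₂ u hu => exact mem_unitResidues_of_isUnit hu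
  | h₃ w π _ hπ ih =>
    rw [Zsqrtd.norm_mul] at hodd hadm
    obtain ⟨hoddπ, hoddw⟩ := Int.odd_mul.1 hodd
    have hadmπ : ∀ q, IsAdmissibleFactor q → ¬ q ∣ π.norm := fun q hq h => hadm q hq (h.mul_right _)
    refine mul_mem ?_ (ih hoddw fun q hq h => hadm q hq (h.mul_left _))
    obtain ⟨p, hp, hnorm | ⟨hp4, hassoc⟩⟩ := exists_nat_prime_norm_eq_or_associated hπ
    · exact mem_unitResidues_of_norm_prime hp hnorm hoddπ hadmπ
    · exact mem_unitResidues_of_associated_prime hp hp4 hassoc hadmπ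

theorem exists_isAdmissibleFactor_dvd_norm {g : GaussianInt} (hre : Odd g.re) (him : Odd g.im)
    (hg : ¬ (g.re ^ 2 ≡ 1 [ZMOD 16] ∧ g.im ^ 2 ≡ 1 [ZMOD 16])) :
    ∃ q, IsAdmissibleFactor q ∧ 2 * q ∣ g.norm := by
  obtain ⟨w, rfl⟩ : ∃ w : GaussianInt, g = ⟨1, 1⟩ * w := by
    refine ⟨⟨(g.re + g.im) / 2, (g.im - g.re) / 2⟩, ?_⟩
    ext <;> simp <;> grind
  have hnorm : Zsqrtd.norm (⟨1, 1⟩ * w : GaussianInt) = 2 * w.norm := by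
    rw [Zsqrtd.norm_mul]
    rfl
  have hodd : Odd w.norm := by
    rw [Zsqrtd.norm_def]
    simp [Int.odd_add, Int.odd_mul] at hre ⊢
    grind
  rw [hnorm]
  by_contra! hadm
  have hw := sq_add_im_modEq_one_of_mem_unitResidues (mem_unitResidues_of_not_dvd_norm hodd
    fun q hq h => hadm q hq (mul_dvd_mul_left 2 h))
  refine hg ?_
  convert! hw.symm using 3 <;> simp <;> ring

end GaussianResidues

section NormCongruences

open QuadraticAlgebra

theorem sq_sub_sq_sq_modEq {a b : ℤ} (hab : Odd (a + b)) :
    (a ^ 2 - b ^ 2) ^ 2 ≡ 1 + 4 * (a * b) [ZMOD 16] := by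
  obtain ⟨x, hx⟩ := Int.eight_dvd_sq_sub_one_of_odd hab
  obtain ⟨y, hy⟩ := Int.eight_dvd_sq_sub_one_of_odd (hab.sub_even (even_two_mul b))
  refine (Int.modEq_iff_dvd.2 ⟨y + 4 * x * y, ?_⟩).symm
  linear_combination ((a - b) ^ 2 - 1) * hx + (2 + 8 * x) * hy

theorem norm_octicInt (z : OcticInt) : z.norm = z.re ^ 2 - Zsqrtd.sqrtd * z.im ^ 2 := by
  rw [QuadraticAlgebra.norm_def]
  ring

theorem re_norm_octicInt (z : OcticInt) :
    z.norm.re = z.re.re ^ 2 - z.re.im ^ 2 + 2 * (z.im.re * z.im.im) := by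
  simp [norm_octicInt, sq]
  ring

theorem im_norm_octicInt (z : OcticInt) :
    z.norm.im = 2 * (z.re.re * z.re.im) - (z.im.re ^ 2 - z.im.im ^ 2) := by
  simp [norm_octicInt, sq]
  ring

theorem even_mul_of_odd_add {a b : ℤ} (h : Odd (a + b)) : Even (a * b) := by
  rw [Int.even_mul]
  by_contra! hab
  simp_all [Int.odd_add, parity_simps]

theorem odd_sq_sub_sq {a b : ℤ} (h : Odd (a + b)) : Odd (a ^ 2 - b ^ 2) := by
  simpa [Int.odd_add, Int.odd_sub, parity_simps] using h

theorem re_norm_octicInt_sq_modEq {z : OcticInt} (hre : Odd (z.re.re + z.re.im))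
    (him : Odd (z.im.re + z.im.im)) :
    z.norm.re ^ 2 ≡ 1 + 4 * (z.re.re * z.re.im + z.im.re * z.im.im) [ZMOD 16] := by
  obtain ⟨A, hA⟩ := odd_sq_sub_sq hre
  obtain ⟨B, hB⟩ := (even_mul_of_odd_add him).two_dvd
  have hsq := sq_sub_sq_sq_modEq hre
  rw [hA] at hsq
  rw [re_norm_octicInt, hA, hB]
  calc (2 * A + 1 + 2 * (2 * B)) ^ 2
      ≡ (2 * A + 1) ^ 2 + 8 * B [ZMOD 16] := Int.modEq_iff_dvd.2 ⟨-(A * B + B ^ 2), by ring⟩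
    _ ≡ 1 + 4 * (z.re.re * z.re.im) + 8 * B [ZMOD 16] := hsq.add_right _
    _ = 1 + 4 * (z.re.re * z.re.im + 2 * B) := by ring

theorem four_dvd_sq_sub_sq {a b : ℤ} (h : Even (a + b)) : 4 ∣ a ^ 2 - b ^ 2 := by
  rw [sq_sub_sq]
  exact mul_dvd_mul h.two_dvd (by simpa [Int.even_sub, Int.even_add] using h : Even (a - b)).two_dvd

theorem even_sq_sub_sq_mul (a b : ℤ) : Even ((a ^ 2 - b ^ 2) * (a * b)) := by
  simp only [Int.even_mul, Int.even_sub, Int.even_pow' two_ne_zero]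
  tauto

theorem four_dvd_sq_sub_sq_mul_sq_sub_sq {a b c d : ℤ} (h : Odd (a + b + (c + d))) :
    4 ∣ (a ^ 2 - b ^ 2) * (c ^ 2 - d ^ 2) := by
  obtain hab | hab := Int.even_or_odd (a + b)
  · exact (four_dvd_sq_sub_sq hab).mul_right _
  · exact (four_dvd_sq_sub_sq ((Int.odd_add.1 h).1 hab)).mul_left _

theorem re_sq_add_sqrtd_mul_sq_add (x y w : GaussianInt) :
    (x ^ 2 + Zsqrtd.sqrtd * y ^ 2 + 2 * w).re =
      x.re ^ 2 - x.im ^ 2 - 2 * (y.re * y.im) + 2 * w.re := by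
  simp [sq]
  ring

theorem im_sq_add_sqrtd_mul_sq_add (x y w : GaussianInt) :
    (x ^ 2 + Zsqrtd.sqrtd * y ^ 2 + 2 * w).im =
      2 * (x.re * x.im) + (y.re ^ 2 - y.im ^ 2) + 2 * w.im := by
  simp [sq]
  ring

theorem even_re_add_im_sq_add_sqrtd_mul_sq_add (x y w : GaussianInt) :
    Even ((x ^ 2 + Zsqrtd.sqrtd * y ^ 2 + 2 * w).re + (x ^ 2 + Zsqrtd.sqrtd * y ^ 2 + 2 * w).im) ↔
      Even (x.re + x.im + (y.re + y.im)) := by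
  rw [re_sq_add_sqrtd_mul_sq_add, im_sq_add_sqrtd_mul_sq_add]
  simp only [Int.even_add, Int.even_sub, Int.even_pow' two_ne_zero, even_two_mul, iff_true,
    true_iff]

theorem re_mul_im_sq_add_modEq {x y w : GaussianInt} (hxy : Odd (x.re + x.im + (y.re + y.im)))
    (hw : Even (w.re + w.im)) :
    (x ^ 2 + Zsqrtd.sqrtd * y ^ 2 + 2 * w).re * (x ^ 2 + Zsqrtd.sqrtd * y ^ 2 + 2 * w).im
      ≡ 2 * w.re [ZMOD 4] := by
  have hcross : Even ((x.re ^ 2 - x.im ^ 2) * w.im + (y.re ^ 2 - y.im ^ 2) * w.re - w.re) := by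
    simp only [Int.even_sub, Int.even_add, Int.even_mul, Int.even_pow' two_ne_zero,
      ← Int.not_even_iff_odd] at hxy hw ⊢
    tauto
  obtain ⟨k, hk⟩ := four_dvd_sq_sub_sq_mul_sq_sub_sq hxy
  obtain ⟨l, hl⟩ := (even_sq_sub_sq_mul x.re x.im).two_dvd
  obtain ⟨m, hm⟩ := (even_sq_sub_sq_mul y.re y.im).two_dvd
  obtain ⟨n, hn⟩ := hcross.two_dvd
  rw [re_sq_add_sqrtd_mul_sq_add, im_sq_add_sqrtd_mul_sq_add]
  refine (Int.modEq_iff_dvd.2 ⟨k + l - m + n + w.re * w.im + w.re * (x.re * x.im)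
    - (y.re * y.im) * w.im - x.re * x.im * (y.re * y.im), ?_⟩).symm
  linear_combination hk + 2 * hl - 2 * hm + 2 * hn

theorem even_re_add_im_mul {x y : GaussianInt} (h : Odd (x.re + x.im + (y.re + y.im))) :
    Even ((x * y).re + (x * y).im) := by
  simp only [Zsqrtd.re_mul, Zsqrtd.im_mul, Int.even_add, Int.even_mul, ← Int.not_even_iff_odd,
    even_neg, Int.not_even_one, false_or] at h ⊢
  tauto

theorem norm_hexadecicInt_re (z : HexadecicInt) :
    z.norm.re = z.re.re ^ 2 + Zsqrtd.sqrtd * z.re.im ^ 2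
      + 2 * -(Zsqrtd.sqrtd * (z.im.re * z.im.im)) := by
  simp [QuadraticAlgebra.norm_def]
  ring

theorem norm_hexadecicInt_im (z : HexadecicInt) :
    z.norm.im = -(z.im.re ^ 2 + Zsqrtd.sqrtd * z.im.im ^ 2 + 2 * -(z.re.re * z.re.im)) := by
  simp [QuadraticAlgebra.norm_def]
  ring

theorem norm_hexadecicInt_modEq {z : HexadecicInt}
    (hre : Odd (z.re.re.re + z.re.re.im + (z.re.im.re + z.re.im.im)))
    (him : Odd (z.im.re.re + z.im.re.im + (z.im.im.re + z.im.im.im))) :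
    z.norm.re.re * z.norm.re.im + z.norm.im.re * z.norm.im.im
      ≡ 2 * ((z.re.re * z.re.im).im + (z.im.re * z.im.im).im) [ZMOD 4] := by
  have hu := even_re_add_im_mul hre
  have hv := even_re_add_im_mul him
  set u := z.re.re * z.re.im
  set v := z.im.re * z.im.im
  have hP := re_mul_im_sq_add_modEq hre (w := -(Zsqrtd.sqrtd * v))
    (by simpa [Int.even_add, Int.even_sub, iff_comm] using hv)
  have hQ := re_mul_im_sq_add_modEq him (w := -u) (by simpa [Int.even_add] using hu)
  rw [← norm_hexadecicInt_re] at hP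
  obtain ⟨k, hk⟩ := hu.two_dvd
  calc z.norm.re.re * z.norm.re.im + z.norm.im.re * z.norm.im.im
      ≡ 2 * (-(Zsqrtd.sqrtd * v)).re + 2 * (-u).re [ZMOD 4] := by
        rw [norm_hexadecicInt_im, Zsqrtd.re_neg, Zsqrtd.im_neg, neg_mul_neg]
        exact hP.add hQ
    _ = 2 * (v.im - u.re) := by
        simp
        ring
    _ ≡ 2 * (u.im + v.im) [ZMOD 4] := Int.modEq_iff_dvd.2 ⟨k, by linear_combination 2 * hk⟩

end NormCongruences

section Necessity

open QuadraticAlgebra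

theorem even_norm_gaussianInt (g : GaussianInt) : Even g.norm ↔ Even (g.re + g.im) := by
  simp [gaussianInt_norm_eq, parity_simps]

theorem four_dvd_norm_gaussianInt {g : GaussianInt} (hre : Even g.re) (him : Even g.im) :
    4 ∣ g.norm := by
  rw [gaussianInt_norm_eq]
  exact dvd_add (pow_dvd_pow_of_dvd hre.two_dvd 2) (pow_dvd_pow_of_dvd him.two_dvd 2)

theorem even_re_norm_octicInt (z : OcticInt) : Even z.norm.re ↔ Even (z.re.re + z.re.im) := by
  simp [re_norm_octicInt, parity_simps]

theorem even_im_norm_octicInt (z : OcticInt) : Even z.norm.im ↔ Even (z.im.re + z.im.im) := by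
  simp [im_norm_octicInt, parity_simps]

theorem even_re_norm_hexadecicInt (z : HexadecicInt) :
    Even (z.norm.re.re + z.norm.re.im) ↔
      Even (z.re.re.re + z.re.re.im + (z.re.im.re + z.re.im.im)) := by
  rw [norm_hexadecicInt_re, even_re_add_im_sq_add_sqrtd_mul_sq_add]

theorem even_im_norm_hexadecicInt (z : HexadecicInt) :
    Even (z.norm.im.re + z.norm.im.im) ↔
      Even (z.im.re.re + z.im.re.im + (z.im.im.re + z.im.im.im)) := by
  rw [norm_hexadecicInt_im, Zsqrtd.re_neg, Zsqrtd.im_neg, ← neg_add, even_neg,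
    even_re_add_im_sq_add_sqrtd_mul_sq_add]

variable (a : Fin 16 → ℤ)

/-- The images in `ℤ[i]` of the values of `∑ aₖ xᵏ` at `i`, `ζ₈` and `ζ₁₆` under the relative
norms. -/
def gaussianFactor : Fin 3 → GaussianInt :=
  ![gaussianValue a, (octicValue a).norm, (hexadecicValue a).norm.norm]

theorem det_circMatrix_eq_prod_gaussianFactor :
    (circMatrix a).det = ((bcoef a 0 + bcoef a 2) ^ 2 - (bcoef a 1 + bcoef a 3) ^ 2) *
      ∏ i, (gaussianFactor a i).norm := by
  rw [det_circMatrix, Fin.prod_univ_three, mul_assoc, mul_assoc, ← mul_assoc (Zsqrtd.norm _)]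
  rfl

theorem even_re_gaussianFactor (i : Fin 3) :
    Even (gaussianFactor a i).re ↔ Even (bcoef a 0 + bcoef a 2) := by
  fin_cases i
  · simp [gaussianFactor, gaussianValue, parity_simps]
  · simp [gaussianFactor, even_re_norm_octicInt, octicValue, bcoef, ccoef, parity_simps]
  · simp [gaussianFactor, even_re_norm_octicInt, even_re_norm_hexadecicInt, hexadecicValue, bcoef,
      ecoef, parity_simps]

theorem even_im_gaussianFactor (i : Fin 3) :
    Even (gaussianFactor a i).im ↔ Even (bcoef a 1 + bcoef a 3) := by
  fin_cases i
  · simp [gaussianFactor, gaussianValue, parity_simps]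
  · simp [gaussianFactor, even_im_norm_octicInt, octicValue, bcoef, ccoef, parity_simps]
  · simp [gaussianFactor, even_im_norm_octicInt, even_im_norm_hexadecicInt, hexadecicValue, bcoef,
      ecoef, parity_simps]

variable {a}

theorem odd_det_circMatrix (h : Odd (bcoef a 0 + bcoef a 2 + (bcoef a 1 + bcoef a 3))) :
    Odd (circMatrix a).det := by
  rw [det_circMatrix_eq_prod_gaussianFactor]
  refine (odd_sq_sub_sq h).mul (Finset.prod_induction _ Odd (fun _ _ => Odd.mul) odd_one ?_)
  intro i _
  rw [← Int.not_even_iff_odd, even_norm_gaussianInt, Int.even_add, even_re_gaussianFactor,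
    even_im_gaussianFactor, ← Int.even_add, Int.not_even_iff_odd]
  exact h

theorem dvd_det_circMatrix_of_even (hs : Even (bcoef a 0 + bcoef a 2))
    (ht : Even (bcoef a 1 + bcoef a 3)) : 4 ^ 4 ∣ (circMatrix a).det := by
  rw [det_circMatrix_eq_prod_gaussianFactor, pow_succ']
  refine mul_dvd_mul (four_dvd_sq_sub_sq (hs.add ht)) ?_
  have hprod := Finset.prod_dvd_prod_of_dvd (s := univ) (fun _ : Fin 3 => 4) _ fun i _ =>
    four_dvd_norm_gaussianInt ((even_re_gaussianFactor a i).2 hs)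
      ((even_im_gaussianFactor a i).2 ht)
  simpa using hprod

theorem mul_dvd_det_circMatrix {k q : ℤ} (hs : Odd (bcoef a 0 + bcoef a 2))
    (ht : Odd (bcoef a 1 + bcoef a 3))
    (hk : k ∣ (bcoef a 0 + bcoef a 2) ^ 2 - (bcoef a 1 + bcoef a 3) ^ 2) (i : Fin 3)
    (hq : 2 * q ∣ (gaussianFactor a i).norm) : 8 * k * q ∣ (circMatrix a).det := by
  have heven (j : Fin 3) : 2 ∣ (gaussianFactor a j).norm := by
    refine even_iff_two_dvd.1 ((even_norm_gaussianInt _).2 ?_)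
    rw [Int.even_add, even_re_gaussianFactor, even_im_gaussianFactor, ← Int.even_add]
    exact hs.add_odd ht
  rw [det_circMatrix_eq_prod_gaussianFactor, ← Finset.mul_prod_erase univ _ (mem_univ i)]
  have hrest := Finset.prod_dvd_prod_of_dvd (s := univ.erase i) (fun _ => 2) _ fun j _ => heven j
  rw [prod_const, card_erase_of_mem (mem_univ i), card_univ, Fintype.card_fin] at hrest
  calc 8 * k * q = k * (2 * q * 2 ^ (3 - 1)) := by ring
    _ ∣ _ := mul_dvd_mul hk (mul_dvd_mul hq hrest)

theorem bcoef_mul_sub_bcoef_mul_modEq (hc : Odd (ccoef a 1 + ccoef a 3)) :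
    bcoef a 0 * bcoef a 2 - bcoef a 1 * bcoef a 3 ≡ ccoef a 0 * ccoef a 2 + ccoef a 1 * ccoef a 3
      + 2 * (ecoef a 0 * ecoef a 6 + ecoef a 4 * ecoef a 2
        + (ecoef a 1 * ecoef a 7 + ecoef a 5 * ecoef a 3)) [ZMOD 4] := by
  obtain ⟨k, hk⟩ := (even_mul_of_odd_add hc).two_dvd
  refine Int.modEq_iff_dvd.2 ⟨k - (a 0 * a 14 + a 8 * a 6 + a 4 * a 10 + a 12 * a 2)
    + (a 1 * a 7 + a 9 * a 15 + a 5 * a 3 + a 13 * a 11), ?_⟩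
  simp only [bcoef, ccoef, ecoef, Fin.isValue, Fin.reduceAdd] at hk ⊢
  linear_combination 2 * hk

theorem four_dvd_of_re_norm_octicInt_sq_modEq_one {z : OcticInt} (hre : Odd z.norm.re)
    (him : Odd z.norm.im) (hz : z.norm.re ^ 2 ≡ 1 [ZMOD 16]) :
    4 ∣ z.re.re * z.re.im + z.im.re * z.im.im := by
  simp only [← Int.not_even_iff_odd, even_re_norm_octicInt, even_im_norm_octicInt] at hre him
  rw [Int.not_even_iff_odd] at hre him
  have hdvd := Int.modEq_iff_dvd.1 (hz.symm.trans (re_norm_octicInt_sq_modEq hre him))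
  rw [add_sub_cancel_left] at hdvd
  exact Int.dvd_of_mul_dvd_mul_left (by norm_num : (4 : ℤ) ≠ 0) (by simpa using hdvd)

theorem even_of_re_norm_norm_hexadecicInt_sq_modEq_one {z : HexadecicInt}
    (hre : Odd z.norm.norm.re) (him : Odd z.norm.norm.im) (hz : z.norm.norm.re ^ 2 ≡ 1 [ZMOD 16]) :
    Even ((z.re.re * z.re.im).im + (z.im.re * z.im.im).im) := by
  have hdvd := four_dvd_of_re_norm_octicInt_sq_modEq_one hre him hz
  simp only [← Int.not_even_iff_odd, even_re_norm_octicInt, even_im_norm_octicInt,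
    even_re_norm_hexadecicInt, even_im_norm_hexadecicInt] at hre him
  rw [Int.not_even_iff_odd] at hre him
  rw [(norm_hexadecicInt_modEq hre him).dvd_iff] at hdvd
  exact even_iff_two_dvd.2
    (Int.dvd_of_mul_dvd_mul_left (two_ne_zero (α := ℤ)) (by simpa using hdvd))

theorem sixteen_dvd_of_gaussianFactor_sq_modEq_one (hre : ∀ i, Odd (gaussianFactor a i).re)
    (him : ∀ i, Odd (gaussianFactor a i).im)
    (hre_sq : ∀ i, (gaussianFactor a i).re ^ 2 ≡ 1 [ZMOD 16])
    (him_sq : (gaussianFactor a 0).im ^ 2 ≡ 1 [ZMOD 16]) :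
    16 ∣ (bcoef a 0 + bcoef a 2) ^ 2 - (bcoef a 1 + bcoef a 3) ^ 2 := by
  have hc := four_dvd_of_re_norm_octicInt_sq_modEq_one (hre 1) (him 1) (hre_sq 1)
  have he := even_of_re_norm_norm_hexadecicInt_sq_modEq_one (hre 2) (him 2) (hre_sq 2)
  have hodd : Odd (ccoef a 1 + ccoef a 3) := Int.not_even_iff_odd.1 fun h =>
    Int.not_even_iff_odd.2 (him 1) ((even_im_norm_octicInt (octicValue a)).2 h)
  have hb : 4 ∣ bcoef a 0 * bcoef a 2 - bcoef a 1 * bcoef a 3 := by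
    rw [(bcoef_mul_sub_bcoef_mul_modEq hodd).dvd_iff]
    refine dvd_add hc ?_
    have := mul_dvd_mul_left 2 he.two_dvd
    simpa [hexadecicValue] using this
  obtain ⟨k, hk⟩ := hb
  obtain ⟨l, hl⟩ := Int.modEq_iff_dvd.1 (him_sq.trans (hre_sq 0).symm)
  refine ⟨k + l, ?_⟩
  simp only [gaussianFactor, gaussianValue, Matrix.cons_val_zero] at hl
  linear_combination 4 * hk + hl

theorem exists_isAdmissibleFactor_mul_dvd_det (a : Fin 16 → ℤ) : Odd (circMatrix a).det ∨
    128 ∣ (circMatrix a).det ∨ ∃ q, IsAdmissibleFactor q ∧ 64 * q ∣ (circMatrix a).det := by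
  obtain hs | hs := Int.even_or_odd (bcoef a 0 + bcoef a 2) <;>
    obtain ht | ht := Int.even_or_odd (bcoef a 1 + bcoef a 3)
  · exact .inr (.inl (dvd_trans (by norm_num) (dvd_det_circMatrix_of_even hs ht)))
  · exact .inl (odd_det_circMatrix (hs.add_odd ht))
  · exact .inl (odd_det_circMatrix (hs.add_even ht))
  refine .inr ?_
  have hre (i : Fin 3) : Odd (gaussianFactor a i).re := by
    rwa [← Int.not_even_iff_odd, even_re_gaussianFactor, Int.not_even_iff_odd]
  have him (i : Fin 3) : Odd (gaussianFactor a i).im := by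
    rwa [← Int.not_even_iff_odd, even_im_gaussianFactor, Int.not_even_iff_odd]
  by_cases! hgood : ∀ i, (gaussianFactor a i).re ^ 2 ≡ 1 [ZMOD 16] ∧
      (gaussianFactor a i).im ^ 2 ≡ 1 [ZMOD 16]
  · exact .inl (mul_dvd_det_circMatrix (q := 1) hs ht
      (sixteen_dvd_of_gaussianFactor_sq_modEq_one hre him (fun i => (hgood i).1) (hgood 0).2) 0
      (even_iff_two_dvd.1 ((even_norm_gaussianInt _).2 ((hre 0).add_odd (him 0)))))
  · obtain ⟨i, hi⟩ := hgood
    obtain ⟨q, hq, hdvd⟩ := exists_isAdmissibleFactor_dvd_norm (hre i) (him i) fun h => hi h.1 h.2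
    have h8 := (Int.eight_dvd_sq_sub_one_of_odd hs).sub (Int.eight_dvd_sq_sub_one_of_odd ht)
    exact .inr ⟨q, hq, mul_dvd_det_circMatrix (k := 8) hs ht (by simpa using h8) i hdvd⟩

end Necessity

section NormEuclidean

open QuadraticAlgebra

theorem isPrincipalIdealRing_of_exists_sub_mul_lt {R : Type*} [CommRing R] (f : R → ℕ)
    (hf : ∀ x c : R, c ≠ 0 → ∃ q, f (x - q * c) < f c) : IsPrincipalIdealRing R := by
  refine ⟨fun I => ?_⟩
  obtain rfl | hI := eq_or_ne I ⊥
  · exact bot_isPrincipal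
  obtain ⟨c, ⟨hcI, hc0⟩, hmin⟩ := (measure f).wf.has_min {c | c ∈ I ∧ c ≠ 0}
    (Submodule.exists_mem_ne_zero_of_ne_bot hI)
  refine ⟨c, le_antisymm (fun x hx => ?_) ((Ideal.span_singleton_le_iff_mem I).2 hcI)⟩
  obtain ⟨q, hq⟩ := hf x c hc0
  have hrem : x - q * c = 0 := by
    by_contra h
    exact hmin _ ⟨I.sub_mem hx (I.mul_mem_left q hcI), h⟩ hq
  exact Ideal.mem_span_singleton'.2 ⟨q, (sub_eq_zero.1 hrem).symm⟩

theorem exists_associated_norm_of_dvd_sq_sub_mul_sq {R : Type*} [CommRing R] [IsDomain R] {a : R}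
    [IsPrincipalIdealRing (QuadraticAlgebra R a 0)] {π r s : R} (hπ : Prime π)
    (hdvd : π ∣ r ^ 2 - a * s ^ 2) (hs : ¬ π ∣ s) :
    ∃ c : QuadraticAlgebra R a 0, Associated c.norm π := by
  set φ := algebraMap R (QuadraticAlgebra R a 0)
  set w : QuadraticAlgebra R a 0 := ⟨r, s⟩
  have hw : φ π ∣ w * star w := by
    rw [← algebraMap_norm_eq_mul_star]
    refine map_dvd φ ?_
    convert hdvd using 1
    simp [QuadraticAlgebra.norm_def, w]
    ring
  have not_dvd {z : QuadraticAlgebra R a 0} (hz : ¬ π ∣ z.im) : ¬ φ π ∣ z := by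
    rintro ⟨t, rfl⟩
    exact hz ⟨t.im, by simp [φ]⟩
  -- Writing `π = c * d`, the norm of `c` divides `π ^ 2`; neither `c` nor `d` can be a unit.
  obtain ⟨c, hc⟩ := IsPrincipalIdealRing.principal (Ideal.span {φ π, w})
  change _ = Ideal.span {c} at hc
  obtain ⟨d, hd⟩ : c ∣ φ π := Ideal.mem_span_singleton.1 (hc ▸ Ideal.subset_span (by simp))
  have hcw : c ∣ w := Ideal.mem_span_singleton.1 (hc ▸ Ideal.subset_span (by simp))
  have hnorm : π ^ 2 = c.norm * d.norm := by
    rw [← map_mul, ← hd, QuadraticAlgebra.norm_algebraMap]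
  obtain ⟨i, hi, hci⟩ := (dvd_prime_pow hπ 2).1 ⟨_, hnorm⟩
  refine ⟨c, ?_⟩
  interval_cases i
  · have hunit : IsUnit c := isUnit_iff_norm_isUnit.2 (hci.isUnit_iff.2 (by simp))
    obtain ⟨u, v, huv⟩ := Ideal.mem_span_pair.1
      (hc ▸ (Ideal.mem_span_singleton.2 hunit.dvd : (1 : QuadraticAlgebra R a 0) ∈ _))
    have hstar : u * star w * φ π + v * (w * star w) = star w := by linear_combination star w * huv
    have hdvd_star : φ π ∣ star w := hstar ▸ dvd_add (dvd_mul_left _ _) (hw.mul_left v)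
    exact absurd hdvd_star (not_dvd (by simpa [w] using hs))
  · simpa using hci
  · have hunit : IsUnit d := by
      refine isUnit_iff_norm_isUnit.2 (isUnit_of_associated_mul (p := c.norm) ?_ ?_)
      · rw [← hnorm]; exact hci.symm
      · exact hci.symm.ne_zero_iff.1 (pow_ne_zero 2 hπ.ne_zero)
    have hdvd_w : φ π ∣ w := hd ▸ hunit.mul_right_dvd.2 hcw
    exact absurd hdvd_w (not_dvd hs)

end NormEuclidean

section OcticIntPrincipal

open QuadraticAlgebra

theorem octicNorm_nonneg (z : OcticInt) : 0 ≤ octicNorm z := GaussianInt.norm_nonneg _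

theorem octicNorm_eq (z : OcticInt) : octicNorm z =
    (z.re.re ^ 2 + z.re.im ^ 2 + z.im.re ^ 2 + z.im.im ^ 2) ^ 2
      - 2 * (z.re.re * (z.im.re - z.im.im) + z.re.im * (z.im.re + z.im.im)) ^ 2 := by
  change Zsqrtd.norm _ = _
  rw [gaussianInt_norm_eq, re_norm_octicInt, im_norm_octicInt]
  ring

theorem eq_zero_of_octicNorm_eq_zero {z : OcticInt} (h : octicNorm z = 0) : z = 0 := by
  have hsum : z.re.re ^ 2 + z.re.im ^ 2 + z.im.re ^ 2 + z.im.im ^ 2 = 0 := by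
    have hsqrt (n : ℤ) : (2 : ℤ) ≠ n * n := fun hn =>
      Int.prime_two.irreducible.not_isSquare ⟨n, hn⟩
    refine congrArg Zsqrtd.re ((Zsqrtd.norm_eq_zero hsqrt ⟨_, z.re.re * (z.im.re - z.im.im)
      + z.re.im * (z.im.re + z.im.im)⟩).1 ?_)
    rw [← h, octicNorm_eq, Zsqrtd.norm_def]
    ring
  ext <;> simp <;> nlinarith [sq_nonneg z.re.re, sq_nonneg z.re.im, sq_nonneg z.im.re,
    sq_nonneg z.im.im]

theorem octicNorm_pos {z : OcticInt} (hz : z ≠ 0) : 0 < octicNorm z :=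
  (octicNorm_nonneg z).lt_of_ne' (mt eq_zero_of_octicNorm_eq_zero hz)

theorem exists_mul_eq_octicNorm (c : OcticInt) : ∃ c', c * c' = (octicNorm c : OcticInt) := by
  refine ⟨star c * algebraMap _ _ (star c.norm), ?_⟩
  rw [← mul_assoc, ← algebraMap_norm_eq_mul_star, ← map_mul, ← Zsqrtd.norm_eq_mul_conj, map_intCast]
  rfl

theorem octicNorm_intCast (n : ℤ) : octicNorm (n : OcticInt) = n ^ 4 := by
  rw [octicNorm_eq]
  simp
  ring

theorem octicNorm_lt_of_forall_mem_Ico {z : OcticInt} {n : ℤ}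
    (h : ∀ t ∈ [z.re.re, z.re.im, z.im.re, z.im.im], 2 * t ∈ Set.Ico (-n) n) :
    octicNorm z < n ^ 4 := by
  have hsq {t : ℤ} (ht : 2 * t ∈ Set.Ico (-n) n) : 4 * t ^ 2 ≤ n ^ 2 := by
    nlinarith [ht.1, ht.2]
  have eq_of_sq {t : ℤ} (ht : 2 * t ∈ Set.Ico (-n) n) (heq : n ^ 2 ≤ 4 * t ^ 2) : 2 * t = -n := by
    nlinarith [ht.1, ht.2]
  simp only [List.forall_mem_cons] at h
  obtain ⟨h1, h2, h3, h4, -⟩ := h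
  rw [octicNorm_eq]
  have := hsq h1
  have := hsq h2
  have := hsq h3
  have := hsq h4
  obtain hlt | hge := lt_or_ge (z.re.re ^ 2 + z.re.im ^ 2 + z.im.re ^ 2 + z.im.im ^ 2) (n ^ 2)
  · have : (z.re.re ^ 2 + z.re.im ^ 2 + z.im.re ^ 2 + z.im.im ^ 2) ^ 2 < (n ^ 2) ^ 2 :=
      pow_lt_pow_left₀ hlt (by positivity) two_ne_zero
    nlinarith [sq_nonneg (z.re.re * (z.im.re - z.im.im) + z.re.im * (z.im.re + z.im.im))]
  · have e1 := eq_of_sq h1 (by linarith)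
    have e2 := eq_of_sq h2 (by linarith)
    have e3 := eq_of_sq h3 (by linarith)
    have e4 := eq_of_sq h4 (by linarith)
    have hn : 0 < n := by linarith [h1.1, h1.2]
    rw [show z.re.im = z.re.re by linarith, show z.im.re = z.re.re by linarith,
      show z.im.im = z.re.re by linarith, show n = -(2 * z.re.re) by linarith]
    have : 0 < z.re.re ^ 4 := Even.pow_pos (by decide) (by linarith)
    linarith

theorem exists_octicNorm_sub_mul_intCast_lt (y : OcticInt) {n : ℤ} (hn : 0 < n) :
    ∃ q : OcticInt, octicNorm (y - q * n) < n ^ 4 := by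
  lift n to ℕ using hn.le
  have hn' : 0 < n := by exact_mod_cast hn
  refine ⟨⟨⟨y.re.re.bdiv n, y.re.im.bdiv n⟩, ⟨y.im.re.bdiv n, y.im.im.bdiv n⟩⟩,
    octicNorm_lt_of_forall_mem_Ico ?_⟩
  have key (t : ℤ) : 2 * (t - t.bdiv n * n) ∈ Set.Ico (-n : ℤ) n := by
    have := Int.bmod_add_bdiv' t n
    have := Int.le_bmod (x := t) hn'
    have := Int.bmod_lt (x := t) hn'
    constructor <;> omega
  simp [-Set.mem_Ico, key]

instance isPrincipalIdealRing_octicInt : IsPrincipalIdealRing OcticInt := by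
  refine isPrincipalIdealRing_of_exists_sub_mul_lt (fun z => (octicNorm z).toNat) fun x c hc => ?_
  have hpos := octicNorm_pos hc
  obtain ⟨c', hc'⟩ := exists_mul_eq_octicNorm c
  obtain ⟨q, hq⟩ := exists_octicNorm_sub_mul_intCast_lt (x * c') hpos
  refine ⟨q, (Int.toNat_lt_toNat hpos).2 ?_⟩
  rw [← octicNorm_intCast, ← hc', map_mul, ← mul_assoc, ← sub_mul, map_mul] at hq
  exact lt_of_mul_lt_mul_right hq (octicNorm_nonneg c')

end OcticIntPrincipal

section Sufficiency

open QuadraticAlgebra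

theorem mul_mem_S16 {m n : ℤ} (hm : m ∈ S16) (hn : n ∈ S16) : m * n ∈ S16 := by
  obtain ⟨a, rfl⟩ := hm
  obtain ⟨b, rfl⟩ := hn
  refine ⟨(Matrix.circulant a).mulVec b, ?_⟩
  rw [circMatrix_eq_circulant, circMatrix_eq_circulant, circMatrix_eq_circulant, ← Matrix.det_mul,
    Matrix.circulant_mul]

theorem mem_S16_of_odd {n : ℤ} (hn : Odd n) : n ∈ S16 := by
  obtain ⟨a, ha⟩ := exists_det_circulant_eq_of_isCoprime (n := 15) (d := n)
    ((Int.isCoprime_two_right.2 hn).pow_right (n := 4))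
  exact ⟨a, ha.symm⟩

theorem neg_mem_S16 {n : ℤ} (hn : n ∈ S16) : -n ∈ S16 := by
  simpa using mul_mem_S16 (mem_S16_of_odd (n := -1) (by decide)) hn

theorem det_circMatrix_add_const (a : Fin 16 → ℤ) (m : ℤ) :
    (circMatrix fun k => a k + m).det =
      ((bcoef a 0 + bcoef a 2 + 8 * m) ^ 2 - (bcoef a 1 + bcoef a 3 + 8 * m) ^ 2) *
        ((gaussianValue a).norm * octicNorm (octicValue a) *
          octicNorm (hexadecicValue a).norm) := by
  have hb (k : Fin 16) : bcoef (fun k => a k + m) k = bcoef a k + 4 * m := by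
    simp only [bcoef]
    ring
  have hc : ccoef (fun k => a k + m) = ccoef a := by
    ext k
    simp only [ccoef]
    ring
  have he : ecoef (fun k => a k + m) = ecoef a := by
    ext k
    simp only [ecoef]
    ring
  rw [det_circMatrix, gaussianValue, octicValue, hexadecicValue, hc, he, hb, hb, hb, hb,
    add_sub_add_right_eq_sub, add_sub_add_right_eq_sub]
  simp only [gaussianValue, octicValue, hexadecicValue]
  ring

theorem mem_S16_of_dvd {n : ℤ} (hn : 128 ∣ n) : n ∈ S16 := by
  obtain ⟨k, rfl⟩ := hn
  obtain ⟨m, rfl⟩ | ⟨m, rfl⟩ := Int.even_or_odd k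
  · refine ⟨_, .trans ?_ (det_circMatrix_add_const
      ![1, -1, 0, 0, 0, 0, 0, 0, 0, 0, 0, 0, 0, 0, 0, 0] m).symm⟩
    rw [show _ * octicNorm _ * octicNorm _ = 8 from rfl]
    simp [bcoef]
    ring
  · rw [← neg_neg (128 * _)]
    refine neg_mem_S16 ⟨_, .trans ?_ (det_circMatrix_add_const
      ![0, 0, 0, 1, 1, 1, 0, 0, 0, 1, 1, 1, 1, 1, 0, 0] m).symm⟩
    rw [show _ * octicNorm _ * octicNorm _ = 8 from rfl]
    simp [bcoef]
    ring

theorem neg_mul_sq_add_sq_mem_S16 (s t : ℤ) :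
    -(32 * ((8 * s + 1) ^ 2 + (8 * t + 3) ^ 2)) ∈ S16 := by
  set a : Fin 16 → ℤ :=
    ![s, t, -s, -t, s, 1 + t, -s, -t, s, 1 + t, -s, -t, 1 + s, 1 + t, -s, -t]
  have hgaussian : gaussianValue a = ⟨8 * s + 1, 8 * t + 3⟩ := by
    ext <;> simp [gaussianValue, bcoef, a] <;> ring
  have hoctic : octicValue a = ⟨⟨-1, 0⟩, ⟨-1, 0⟩⟩ := by
    ext <;> simp [octicValue, ccoef, a]
  have hhexadecic : hexadecicValue a = ⟨⟨⟨0, -1⟩, 0⟩, ⟨⟨-1, 0⟩, 0⟩⟩ := by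
    ext <;> simp [hexadecicValue, ecoef, a]
  refine ⟨a, ?_⟩
  rw [det_circMatrix, hgaussian, hoctic, hhexadecic, gaussianInt_norm_eq,
    show octicNorm ⟨⟨-1, 0⟩, ⟨-1, 0⟩⟩ = 2 from rfl,
    show octicNorm (QuadraticAlgebra.norm _) = 2 from rfl]
  simp [bcoef, a]
  ring

theorem mul_sq_add_sq_mem_S16 {u v : ℤ} (hu : u ^ 2 ≡ 1 [ZMOD 16]) (hv : v ^ 2 ≡ 9 [ZMOD 16]) :
    32 * (u ^ 2 + v ^ 2) ∈ S16 := by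
  obtain ⟨s, hs⟩ : ∃ s, u ^ 2 = (8 * s + 1) ^ 2 := by
    rcases sq_modEq_one_sixteen_iff.1 hu with h | h
    · exact ⟨u / 8, by rw [show 8 * (u / 8) + 1 = u by omega]⟩
    · exact ⟨-u / 8, by rw [show 8 * (-u / 8) + 1 = -u by omega, neg_sq]⟩
  obtain ⟨t, ht⟩ : ∃ t, v ^ 2 = (8 * t + 3) ^ 2 := by
    rcases sq_modEq_nine_sixteen_iff.1 hv with h | h
    · exact ⟨v / 8, by rw [show 8 * (v / 8) + 3 = v by omega]⟩
    · exact ⟨-v / 8, by rw [show 8 * (-v / 8) + 3 = -v by omega, neg_sq]⟩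
  rw [hs, ht, ← neg_neg (32 * _)]
  exact neg_mem_S16 (neg_mul_sq_add_sq_mem_S16 s t)

theorem mul_octicNorm_mul_pow_eight_add_mem_S16 (k₀ k₁ k₂ k₃ s₀ s₁ s₂ s₃ : ℤ) :
    ((s₀ + 2 * s₂) ^ 2 - (s₁ + 2 * s₃) ^ 2) * ((s₀ - 2 * s₂) ^ 2 + (s₁ - 2 * s₃) ^ 2) *
      octicNorm ⟨⟨4 * k₀ - s₀, 4 * k₂ + 2 * s₂⟩, ⟨4 * k₁ - s₁, 4 * k₃ + 2 * s₃⟩⟩ *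
        (s₀ ^ 8 + s₁ ^ 8) ∈ S16 := by
  -- `a` is chosen so that its polynomial takes the value `s₀ ζ ^ 4 + s₁ ζ ^ 5` at `ζ = ζ₁₆`.
  set a : Fin 16 → ℤ := ![k₀, k₁, s₂ + k₂, s₃ + k₃, s₀ - k₀, s₁ - k₁, -k₂, -k₃,
    k₀, k₁, s₂ + k₂, s₃ + k₃, -k₀, -k₁, -k₂, -k₃]
  have hgaussian : gaussianValue a = ⟨s₀ - 2 * s₂, s₁ - 2 * s₃⟩ := by
    ext <;> simp [gaussianValue, bcoef, a] <;> ring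
  have hoctic : octicValue a =
      ⟨⟨4 * k₀ - s₀, 4 * k₂ + 2 * s₂⟩, ⟨4 * k₁ - s₁, 4 * k₃ + 2 * s₃⟩⟩ := by
    ext <;> simp [octicValue, ccoef, a] <;> ring
  have hhexadecic : octicNorm (hexadecicValue a).norm = s₀ ^ 8 + s₁ ^ 8 := by
    rw [octicNorm_eq]
    simp [hexadecicValue, ecoef, a, QuadraticAlgebra.norm_def]
    ring
  refine ⟨a, ?_⟩
  have hreal : (bcoef a 0 + bcoef a 2) ^ 2 - (bcoef a 1 + bcoef a 3) ^ 2
      = (s₀ + 2 * s₂) ^ 2 - (s₁ + 2 * s₃) ^ 2 := by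
    simp [bcoef, a]
    ring
  rw [det_circMatrix, hreal, hgaussian, hoctic, hhexadecic, gaussianInt_norm_eq]

theorem exists_eq_four_mul_sub_of_odd {n : ℤ} (hn : Odd n) :
    ∃ k σ : ℤ, n = 4 * k - σ ∧ (σ = 1 ∨ σ = -1) := by
  obtain h | h : n % 4 = 3 ∨ n % 4 = 1 := by have := Int.odd_iff.1 hn; omega
  · exact ⟨n / 4 + 1, 1, by omega, .inl rfl⟩
  · exact ⟨n / 4, -1, by omega, .inr rfl⟩

theorem mul_add_mul_modEq_add {a b c d : ℤ} (ha : Odd a) (hb : Odd b) (hc : Even c) (hd : Even d) :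
    a * c + b * d ≡ c + d [ZMOD 4] := by
  refine (Int.modEq_iff_dvd.2 ?_).symm
  rw [show a * c + b * d - (c + d) = (a - 1) * c + (b - 1) * d by ring]
  exact dvd_add (mul_dvd_mul (ha.sub_odd odd_one).two_dvd hc.two_dvd)
    (mul_dvd_mul (hb.sub_odd odd_one).two_dvd hd.two_dvd)

theorem mul_octicNorm_mem_S16_of_odd {z : OcticInt} (h0 : Odd z.re.re) (h1 : Odd z.im.re)
    (h2 : Even z.re.im) (h3 : Even z.im.im)
    (h : z.re.re * z.re.im + z.im.re * z.im.im ≡ 2 [ZMOD 4]) : 32 * octicNorm z ∈ S16 := by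
  obtain ⟨k₀, σ, hk₀, hσ⟩ := exists_eq_four_mul_sub_of_odd h0
  obtain ⟨k₁, τ, hk₁, hτ⟩ := exists_eq_four_mul_sub_of_odd h1
  have hsum : (z.re.im + z.im.im) % 4 = 2 := (mul_add_mul_modEq_add h0 h1 h2 h3).symm.trans h
  obtain ⟨x, hx⟩ := h2.two_dvd
  obtain ⟨y, hy⟩ := h3.two_dvd
  obtain ⟨k₂, k₃, hk₂, hk₃⟩ | ⟨k₂, k₃, hk₂, hk₃⟩ :
      (∃ k₂ k₃, z.re.im = 4 * k₂ + 2 * σ ∧ z.im.im = 4 * k₃ + 2 * 0) ∨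
        ∃ k₂ k₃, z.re.im = 4 * k₂ + 2 * 0 ∧ z.im.im = 4 * k₃ + 2 * τ := by
    obtain hx_odd | hx_even : x % 2 = 1 ∨ x % 2 = 0 := by omega
    · exact .inl ⟨(x - σ) / 2, y / 2, by omega, by omega⟩
    · exact .inr ⟨x / 2, (y - τ) / 2, by omega, by omega⟩
  · convert! mul_octicNorm_mul_pow_eight_add_mem_S16 k₀ k₁ k₂ k₃ σ τ σ 0 using 1
    rw [← hk₀, ← hk₁, ← hk₂, ← hk₃]
    rcases hσ with rfl | rfl <;> rcases hτ with rfl | rfl <;> ring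
  · convert! neg_mem_S16 (mul_octicNorm_mul_pow_eight_add_mem_S16 k₀ k₁ k₂ k₃ σ τ 0 τ) using 1
    rw [← hk₀, ← hk₁, ← hk₂, ← hk₃]
    rcases hσ with rfl | rfl <;> rcases hτ with rfl | rfl <;> ring

theorem octicNorm_omega_mul (z : OcticInt) : octicNorm (ω * z) = octicNorm z := by
  rw [map_mul, show octicNorm ω = 1 from rfl, one_mul]

theorem mul_octicNorm_mem_S16_of_odd_re {z : OcticInt} (h0 : Odd z.re.re)
    (hre : Odd (z.re.re + z.re.im)) (him : Odd (z.im.re + z.im.im))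
    (h : z.re.re * z.re.im + z.im.re * z.im.im ≡ 2 [ZMOD 4]) : 32 * octicNorm z ∈ S16 := by
  have h2 : Even z.re.im := (Int.odd_add.1 hre).1 h0
  obtain h1 | h1 := Int.even_or_odd z.im.re
  · have h3 : Odd z.im.im := (Int.odd_add'.1 him).2 h1
    rw [← octicNorm_omega_mul]
    refine mul_octicNorm_mem_S16_of_odd (by simpa using h3) (by simpa using h0)
      (by simpa using h1) (by simpa using h2) ?_
    obtain ⟨k, hk⟩ := h1.two_dvd
    refine .trans (Int.modEq_iff_dvd.2 ⟨k * z.im.im, ?_⟩) h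
    simp
    linear_combination 2 * z.im.im * hk
  · exact mul_octicNorm_mem_S16_of_odd h0 h1 h2 ((Int.odd_add.1 him).1 h1) h

theorem mul_octicNorm_mem_S16 {z : OcticInt} (hre : Odd (z.re.re + z.re.im))
    (him : Odd (z.im.re + z.im.im)) (h : z.re.re * z.re.im + z.im.re * z.im.im ≡ 2 [ZMOD 4]) :
    32 * octicNorm z ∈ S16 := by
  obtain h0 | h0 := Int.even_or_odd z.re.re
  · have h2 : Odd z.re.im := (Int.odd_add'.1 hre).2 h0
    rw [← octicNorm_omega_mul, ← octicNorm_omega_mul]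
    refine mul_octicNorm_mem_S16_of_odd_re (by simpa using h2) ?_ ?_ ?_
    · simpa [neg_add_eq_sub, Int.odd_sub, Int.odd_add] using hre
    · simpa [neg_add_eq_sub, Int.odd_sub, Int.odd_add] using him
    · refine .trans ?_ (h.neg.trans (by decide))
      simp [add_comm, mul_comm]
  · exact mul_octicNorm_mem_S16_of_odd_re h0 hre him h

theorem exists_octicInt_associated_norm {π : GaussianInt} {p : ℕ} (hp : p.Prime)
    (hp8 : p % 8 = 1 ∨ p % 8 = 3) (hπ : Prime π) (hπp : π ∣ p) :
    ∃ c : OcticInt, Associated c.norm π := by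
  have := Fact.mk hp
  have hp2 : p ≠ 2 := by rintro rfl; simp at hp8
  obtain ⟨k, hk⟩ : ∃ k : ℤ, (p : ℤ) ∣ k ^ 2 + 2 := by
    obtain ⟨y, hy⟩ := (ZMod.exists_sq_eq_neg_two_iff hp2).2 hp8
    obtain ⟨k, rfl⟩ := ZMod.intCast_surjective y
    refine ⟨k, (ZMod.intCast_zmod_eq_zero_iff_dvd _ p).1 ?_⟩
    push_cast
    rw [sq, ← hy, neg_add_cancel]
  have hπk : π ∣ (k : GaussianInt) ^ 2 + 2 := hπp.trans (by exact_mod_cast Int.cast_dvd_cast _ _ hk)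
  refine exists_associated_norm_of_dvd_sq_sub_mul_sq (r := ⟨-1, 1⟩) (s := k) hπ ?_ fun h => ?_
  · convert hπk.mul_left (-Zsqrtd.sqrtd) using 1
    ext <;> simp [sq]
    ring
  · have htwo : π ∣ 2 := (dvd_add_right (dvd_pow h two_ne_zero)).1 hπk
    have hcop : IsCoprime (p : GaussianInt) 2 := by
      exact_mod_cast ((Nat.coprime_primes hp Nat.prime_two).2 hp2).isCoprime.intCast
    exact hπ.not_isUnit (hcop.isUnit_of_dvd' hπp htwo)

theorem re_sq_modEq_of_associated {g h : GaussianInt} {c n : ℤ} (hgh : Associated g h)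
    (hre : g.re ^ 2 ≡ c [ZMOD n]) (him : g.im ^ 2 ≡ c [ZMOD n]) : h.re ^ 2 ≡ c [ZMOD n] := by
  obtain ⟨u, rfl⟩ := hgh
  have hunit := isUnit_iff_re_sq_add_im_sq.1 u.isUnit
  have hmul := re_mul_im_eq_zero_of_isUnit u.isUnit
  calc (g * u).re ^ 2
      = (u : GaussianInt).re ^ 2 * g.re ^ 2 + (u : GaussianInt).im ^ 2 * g.im ^ 2 := by
        simp
        linear_combination -2 * g.re * g.im * hmul
    _ ≡ (u : GaussianInt).re ^ 2 * c + (u : GaussianInt).im ^ 2 * c [ZMOD n] :=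
        (hre.mul_left _).add (him.mul_left _)
    _ = c := by rw [← add_mul, hunit, one_mul]

theorem gaussianInt_norm_eq_of_associated {g h : GaussianInt} (hgh : Associated g h) :
    g.norm = h.norm :=
  Int.eq_of_associated_of_nonneg (hgh.map Zsqrtd.normMonoidHom) (GaussianInt.norm_nonneg g)
    (GaussianInt.norm_nonneg h)

theorem mul_norm_mem_S16 {π : GaussianInt} {p : ℕ} (hp : p.Prime) (hp8 : p % 8 = 1 ∨ p % 8 = 3)
    (hπ : Prime π) (hπp : π ∣ p) (hadd : (π.re + π.im) ^ 2 ≡ 9 [ZMOD 16])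
    (hsub : (π.im - π.re) ^ 2 ≡ 9 [ZMOD 16]) : 64 * π.norm ∈ S16 := by
  obtain ⟨c, hc⟩ := exists_octicInt_associated_norm hp hp8 hπ hπp
  set z : OcticInt := (1 - ω) * c with hz
  have hassoc : Associated (⟨1, -1⟩ * π) z.norm := by
    rw [hz, map_mul, show QuadraticAlgebra.norm (1 - ω : OcticInt) = ⟨1, -1⟩ from rfl]
    exact hc.symm.mul_left _
  have hnorm : z.norm.norm = 2 * π.norm := by
    rw [← gaussianInt_norm_eq_of_associated hassoc, Zsqrtd.norm_mul]
    rfl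
  have hre_sq : z.norm.re ^ 2 ≡ 9 [ZMOD 16] :=
    re_sq_modEq_of_associated hassoc (by simpa using hadd) (by simpa [← sub_eq_add_neg] using hsub)
  have hre : Odd z.norm.re := by
    rcases sq_modEq_nine_sixteen_iff.1 hre_sq with h | h <;> exact Int.odd_iff.2 (by omega)
  have him : Odd z.norm.im := by
    have heven : Even (z.norm.re + z.norm.im) :=
      (even_norm_gaussianInt _).1 (hnorm ▸ even_two_mul π.norm)
    exact (Int.even_add'.1 heven).1 hre
  rw [← Int.not_even_iff_odd, even_re_norm_octicInt, Int.not_even_iff_odd] at hre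
  rw [← Int.not_even_iff_odd, even_im_norm_octicInt, Int.not_even_iff_odd] at him
  have hmod := (re_norm_octicInt_sq_modEq hre him).symm.trans hre_sq
  have hmem := mul_octicNorm_mem_S16 hre him (by rw [Int.ModEq] at hmod ⊢; omega)
  rwa [show octicNorm z = 2 * π.norm from hnorm, ← mul_assoc] at hmem

theorem gaussianInt_prime_of_prime_norm {g : GaussianInt} (hg : Prime g.norm) : Prime g := by
  have : IsLocalHom (Zsqrtd.normMonoidHom (d := -1)) :=
    ⟨fun w hw => (Zsqrtd.isUnit_iff_norm_isUnit w).2 hw⟩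
  exact (Irreducible.of_map (f := Zsqrtd.normMonoidHom) hg.irreducible).prime

theorem mul_mem_S16_of_one_mod_eight {p : ℕ} {a b : ℤ} (hp : p.Prime) (hp8 : p % 8 = 1)
    (hab : (p : ℤ) = a ^ 2 + b ^ 2) (h : a + b ≡ 3 [ZMOD 8] ∨ a + b ≡ 5 [ZMOD 8]) :
    64 * (p : ℤ) ∈ S16 := by
  have hnorm : Zsqrtd.norm (⟨a, b⟩ : GaussianInt) = p := by rw [gaussianInt_norm_eq, hab]
  have hadd : (a + b) ^ 2 ≡ 9 [ZMOD 16] := sq_modEq_nine_sixteen_iff.2 h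
  have hsub : (b - a) ^ 2 ≡ 9 [ZMOD 16] := by
    rw [show (b - a) ^ 2 = 2 * p - (a + b) ^ 2 by rw [hab]; ring]
    rw [Int.ModEq] at hadd ⊢
    omega
  have hdvd : (⟨a, b⟩ : GaussianInt) ∣ p :=
    ⟨star ⟨a, b⟩, by rw [← Zsqrtd.norm_eq_mul_conj, hnorm, Int.cast_natCast]⟩
  rw [← hnorm]
  exact mul_norm_mem_S16 hp (.inl hp8)
    (gaussianInt_prime_of_prime_norm (hnorm ▸ Nat.prime_iff_prime_int.1 hp)) hdvd hadd hsub

theorem mul_mem_S16_of_five_mod_eight {p : ℕ} (hp : p.Prime) (hp8 : p % 8 = 5) :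
    64 * (p : ℤ) ∈ S16 := by
  have := Fact.mk hp
  obtain ⟨a, b, hab⟩ := Nat.Prime.sq_add_sq (p := p) (by omega)
  set u : ℤ := a + b
  set v : ℤ := a - b
  have hsum : u ^ 2 + v ^ 2 = 2 * p := by
    rw [← hab]
    push_cast
    ring
  have hodd : Odd u := by
    have : Odd (a ^ 2 + b ^ 2) := hab ▸ Nat.odd_iff.2 (by omega)
    simpa [u, Nat.odd_add, Int.odd_add, Nat.odd_pow_iff two_ne_zero, parity_simps] using this
  rw [show 64 * (p : ℤ) = 32 * (u ^ 2 + v ^ 2) by rw [hsum]; ring]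
  have hu : u ^ 2 ≡ 1 [ZMOD 16] ∨ u ^ 2 ≡ 9 [ZMOD 16] := by
    rw [sq_modEq_one_sixteen_iff, sq_modEq_nine_sixteen_iff]
    have := Int.odd_iff.1 hodd
    omega
  obtain hu | hu := hu
  · exact mul_sq_add_sq_mem_S16 hu (by rw [Int.ModEq] at hu ⊢; omega)
  · rw [add_comm]
    exact mul_sq_add_sq_mem_S16 (by rw [Int.ModEq] at hu ⊢; omega) hu

theorem mul_mem_S16_of_three_mod_eight {p : ℕ} (hp : p.Prime) (hp8 : p % 8 = 3) :
    64 * (p : ℤ) ^ 2 ∈ S16 := by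
  have := Fact.mk hp
  have hsq : (p : ℤ) ^ 2 ≡ 9 [ZMOD 16] := sq_modEq_nine_sixteen_iff.2 (.inl (by omega))
  have hπ := GaussianInt.prime_of_nat_prime_of_mod_four_eq_three p (by omega)
  have hmem := mul_norm_mem_S16 hp (.inr hp8) hπ dvd_rfl (by simpa using hsq) (by simpa using hsq)
  rwa [Zsqrtd.norm_natCast, ← sq] at hmem

theorem mul_mem_S16_of_isAdmissibleFactor {q : ℤ} (hq : IsAdmissibleFactor q) (m : ℤ) :
    64 * q * m ∈ S16 := by
  obtain ⟨k, rfl⟩ | hm := Int.even_or_odd m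
  · exact mem_S16_of_dvd ⟨q * k, by ring⟩
  · refine mul_mem_S16 ?_ (mem_S16_of_odd hm)
    cases hq with
    | one_mod_eight hp hp8 hab h => exact mul_mem_S16_of_one_mod_eight hp hp8 hab h
    | five_mod_eight hp hp8 => exact mul_mem_S16_of_five_mod_eight hp hp8
    | three_mod_eight hp hp8 => exact mul_mem_S16_of_three_mod_eight hp hp8

theorem mem_S16_iff {n : ℤ} :
    n ∈ S16 ↔ Odd n ∨ 128 ∣ n ∨ ∃ q, IsAdmissibleFactor q ∧ 64 * q ∣ n := by
  refine ⟨?_, ?_⟩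
  · rintro ⟨a, rfl⟩
    exact exists_isAdmissibleFactor_mul_dvd_det a
  · rintro (hn | hn | ⟨q, hq, m, rfl⟩)
    · exact mem_S16_of_odd hn
    · exact mem_S16_of_dvd hn
    · exact mul_mem_S16_of_isAdmissibleFactor hq m

end Sufficiency

theorem taussky_todd_S16 :
    S16 =
      {n : ℤ | Odd n} ∪ {n : ℤ | (128 : ℤ) ∣ n} ∪
      {n : ℤ | ∃ (p : ℕ) (m a b : ℤ), p.Prime ∧ p % 8 = 1 ∧ (p : ℤ) = a ^ 2 + b ^ 2 ∧
        (a + b ≡ 3 [ZMOD 8] ∨ a + b ≡ 5 [ZMOD 8]) ∧ n = 64 * p * m} ∪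
      {n : ℤ | ∃ (p : ℕ) (m : ℤ), p.Prime ∧ p % 8 = 5 ∧ n = 64 * p * m} ∪
      {n : ℤ | ∃ (p : ℕ) (m : ℤ), p.Prime ∧ p % 8 = 3 ∧ n = 64 * (p : ℤ) ^ 2 * m} := by
  ext n
  rw [mem_S16_iff]
  constructor
  · rintro (hn | hn | ⟨_, ⟨hp, hp8, hab, h⟩ | ⟨hp, hp8⟩ | ⟨hp, hp8⟩, m, rfl⟩)
    · exact .inl (.inl (.inl (.inl hn)))
    · exact .inl (.inl (.inl (.inr hn)))
    · exact .inl (.inl (.inr ⟨_, m, _, _, hp, hp8, hab, h, rfl⟩))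
    · exact .inl (.inr ⟨_, m, hp, hp8, rfl⟩)
    · exact .inr ⟨_, m, hp, hp8, rfl⟩
  · rintro ((((hn | hn) | ⟨p, m, a, b, hp, hp8, hab, h, rfl⟩) | ⟨p, m, hp, hp8, rfl⟩) |
      ⟨p, m, hp, hp8, rfl⟩)
    · exact .inl hn
    · exact .inr (.inl hn)
    · exact .inr (.inr ⟨_, .one_mod_eight hp hp8 hab h, m, rfl⟩)
    · exact .inr (.inr ⟨_, .five_mod_eight hp hp8, m, rfl⟩)
    · exact .inr (.inr ⟨_, .three_mod_eight hp hp8, m, rfl⟩)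
end

section
/- For integers a_0, …, a_15, the complex number α_1 := f(ζ_16) f(ζ_16^5) f(ζ_16^9) f(ζ_16^13) has real and imaginary parts given by the following integer polynomial identities in e_0, …, e_7: Re(α_1) = e_0⁴ + e_4⁴ − e_2⁴ − e_6⁴ − 6e_0²e_4² + 6e_2²e_6² − 2(e_1² − e_5²)(e_3² − e_7²) + 4(e_2e_6 + e_1e_7 + e_3e_5)(e_0² − e_4²) − 4(e_0e_6 + e_2e_4 − e_1e_5)(e_1² − e_5²) + 4(e_0e_4 + e_1e_3 − e_5e_7)(e_2² − e_6²) − 4(e_0e_2 − e_4e_6 + e_3e_7)(e_3² − e_7²) − 8e_0e_2e_1e_5 + 8e_0e_4e_1e_3 − 8e_0e_4e_5e_7 + 8e_0e_6e_3e_7 + 8e_2e_4e_3e_7 − 8e_2e_6e_1e_7 − 8e_2e_6e_3e_5 + 8e_4e_6e_1e_5 + 8e_1e_3e_5e_7, and Im(α_1) = e_3⁴ + e_7⁴ − e_1⁴ − e_5⁴ − 6e_3²e_7² + 6e_1²e_5² − 2(e_0² − e_4²)(e_2² − e_6²) + 4(e_0e_4 − e_1e_3 + e_5e_7)(e_0²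 − e_4²) + 4(e_0e_2 − e_4e_6 − e_3e_7)(e_1² − e_5²) − 4(e_2e_6 − e_1e_7 − e_3e_5)(e_2² − e_6²) − 4(e_0e_6 + e_2e_4 + e_1e_5)(e_3² − e_7²) + 8e_0e_2e_4e_6 − 8e_0e_2e_3e_7 + 8e_0e_4e_1e_7 + 8e_0e_4e_3e_5 − 8e_0e_6e_1e_5 − 8e_2e_4e_1e_5 + 8e_2e_6e_1e_3 − 8e_2e_6e_5e_7 + 8e_4e_6e_3e_7. In particular, α_1 ∈ ℤ[i]. -/
open Complex Finset

def alpha1ReInt (a : Fin 16 → ℤ) : ℤ :=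
  let e := ecoef a
  e 0 ^ 4 + e 4 ^ 4 - e 2 ^ 4 - e 6 ^ 4 - 6 * e 0 ^ 2 * e 4 ^ 2 + 6 * e 2 ^ 2 * e 6 ^ 2
    - 2 * (e 1 ^ 2 - e 5 ^ 2) * (e 3 ^ 2 - e 7 ^ 2)
    + 4 * (e 2 * e 6 + e 1 * e 7 + e 3 * e 5) * (e 0 ^ 2 - e 4 ^ 2)
    - 4 * (e 0 * e 6 + e 2 * e 4 - e 1 * e 5) * (e 1 ^ 2 - e 5 ^ 2)
    + 4 * (e 0 * e 4 + e 1 * e 3 - e 5 * e 7) * (e 2 ^ 2 - e 6 ^ 2)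
    - 4 * (e 0 * e 2 - e 4 * e 6 + e 3 * e 7) * (e 3 ^ 2 - e 7 ^ 2)
    - 8 * e 0 * e 2 * e 1 * e 5 + 8 * e 0 * e 4 * e 1 * e 3 - 8 * e 0 * e 4 * e 5 * e 7
    + 8 * e 0 * e 6 * e 3 * e 7 + 8 * e 2 * e 4 * e 3 * e 7 - 8 * e 2 * e 6 * e 1 * e 7
    - 8 * e 2 * e 6 * e 3 * e 5 + 8 * e 4 * e 6 * e 1 * e 5 + 8 * e 1 * e 3 * e 5 * e 7

def alpha1ImInt (a : Fin 16 → ℤ) : ℤ :=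
  let e := ecoef a
  e 3 ^ 4 + e 7 ^ 4 - e 1 ^ 4 - e 5 ^ 4 - 6 * e 3 ^ 2 * e 7 ^ 2 + 6 * e 1 ^ 2 * e 5 ^ 2
    - 2 * (e 0 ^ 2 - e 4 ^ 2) * (e 2 ^ 2 - e 6 ^ 2)
    + 4 * (e 0 * e 4 - e 1 * e 3 + e 5 * e 7) * (e 0 ^ 2 - e 4 ^ 2)
    + 4 * (e 0 * e 2 - e 4 * e 6 - e 3 * e 7) * (e 1 ^ 2 - e 5 ^ 2)
    - 4 * (e 2 * e 6 - e 1 * e 7 - e 3 * e 5) * (e 2 ^ 2 - e 6 ^ 2)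
    - 4 * (e 0 * e 6 + e 2 * e 4 + e 1 * e 5) * (e 3 ^ 2 - e 7 ^ 2)
    + 8 * e 0 * e 2 * e 4 * e 6 - 8 * e 0 * e 2 * e 3 * e 7 + 8 * e 0 * e 4 * e 1 * e 7
    + 8 * e 0 * e 4 * e 3 * e 5 - 8 * e 0 * e 6 * e 1 * e 5 - 8 * e 2 * e 4 * e 1 * e 5
    + 8 * e 2 * e 6 * e 1 * e 3 - 8 * e 2 * e 6 * e 5 * e 7 + 8 * e 4 * e 6 * e 3 * e 7

/-!
Since `z ^ 8 = -1`, reducing `f` modulo `x ^ 8 + 1` leaves the cubic `∑ (e_k + e_{k+4} i) x ^ k`,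
`k < 4`, at each of `z, z⁵, z⁹, z¹³`, where `i = z ^ 4` is common to the four points. As `z⁹ = -z`,
`z¹³ = -z⁵` and `(z⁵)² = -z²`, pairing opposite points twice eliminates `z`, and the product is the
image of an explicit Gaussian integer.
-/

theorem sum_mul_pow_fin_add_self {R : Type*} [Semiring R] (n : ℕ) (c : Fin (n + n) → R) (x : R) :
    ∑ k, c k * x ^ (k : ℕ) =
      ∑ k : Fin n, (c (Fin.castAdd n k) + c (Fin.natAdd n k) * x ^ n) * x ^ (k : ℕ) := by
  simp only [Fin.sum_univ_add, Fin.val_castAdd, Fin.val_natAdd, ← sum_add_distrib, add_mul,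
    mul_assoc, ← pow_add]

section CommRing

variable {R S : Type*} [CommRing R] [CommRing S]

/-- The norm over `R` of the element `∑ k, c k * x ^ k` of `R[x] / (x ^ 4 - t)`, in the form
`P ^ 2 - t * Q ^ 2`, where `P + Q * x ^ 2` is its norm to the subring `R[x ^ 2]`. -/
def quarticNorm (t : R) (c : Fin 4 → R) : R :=
  (c 0 ^ 2 + t * c 2 ^ 2 - 2 * t * (c 1 * c 3)) ^ 2
    - t * (2 * (c 0 * c 2) - c 1 ^ 2 - t * c 3 ^ 2) ^ 2

theorem map_quarticNorm (φ : R →+* S) (t : R) (c : Fin 4 → R) :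
    φ (quarticNorm t c) = quarticNorm (φ t) (φ ∘ c) := by
  simp only [quarticNorm, Function.comp_apply, map_sub, map_add, map_mul, map_pow, map_ofNat]

theorem cubic_mul_cubic_neg {t x : R} (hx : x ^ 4 = t) (c : Fin 4 → R) :
    (∑ k, c k * x ^ (k : ℕ)) * ∑ k, c k * (-x) ^ (k : ℕ) =
      (c 0 ^ 2 + t * c 2 ^ 2 - 2 * t * (c 1 * c 3))
        + (2 * (c 0 * c 2) - c 1 ^ 2 - t * c 3 ^ 2) * x ^ 2 := by
  simp only [Fin.sum_univ_four, Fin.coe_ofNat_eq_mod, Nat.reduceMod, ← hx]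
  ring

theorem prod_cubic_conjugates_eq_quarticNorm {t x y : R} (hx : x ^ 4 = t) (hy : y ^ 2 = -x ^ 2)
    (c : Fin 4 → R) :
    ((∑ k, c k * x ^ (k : ℕ)) * ∑ k, c k * (-x) ^ (k : ℕ))
      * ((∑ k, c k * y ^ (k : ℕ)) * ∑ k, c k * (-y) ^ (k : ℕ)) = quarticNorm t c := by
  have hy4 : y ^ 4 = t := by
    calc y ^ 4 = (y ^ 2) ^ 2 := by ring
      _ = t := by rw [hy, ← hx]; ring
  rw [cubic_mul_cubic_neg hx, cubic_mul_cubic_neg hy4, hy, quarticNorm]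
  linear_combination -(2 * (c 0 * c 2) - c 1 ^ 2 - t * c 3 ^ 2) ^ 2 * hx

end CommRing

/-- The coefficients `e_k + e_{k+4} i`, `k < 4`, of the cubic over `ℤ[i]` to which
`∑ k, a k * x ^ k` reduces modulo `x ^ 4 = i`. -/
def gaussianCoef (a : Fin 16 → ℤ) : Fin 4 → GaussianInt :=
  ![⟨ecoef a 0, ecoef a 4⟩, ⟨ecoef a 1, ecoef a 5⟩, ⟨ecoef a 2, ecoef a 6⟩,
    ⟨ecoef a 3, ecoef a 7⟩]

theorem sq_sub_sqrtd_mul_sq (p q r s : ℤ) :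
    (⟨p, q⟩ ^ 2 - Zsqrtd.sqrtd * ⟨r, s⟩ ^ 2 : GaussianInt) =
      ⟨p ^ 2 - q ^ 2 + 2 * r * s, 2 * p * q - r ^ 2 + s ^ 2⟩ := by
  ext <;>
  · simp only [pow_two, Zsqrtd.re_sub, Zsqrtd.im_sub, Zsqrtd.re_mul, Zsqrtd.im_mul,
      Zsqrtd.re_sqrtd, Zsqrtd.im_sqrtd]
    ring

theorem quarticNorm_gaussianCoef (a : Fin 16 → ℤ) :
    quarticNorm Zsqrtd.sqrtd (gaussianCoef a) = ⟨alpha1ReInt a, alpha1ImInt a⟩ := by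
  let e := ecoef a
  let c := gaussianCoef a
  have const_coef : c 0 ^ 2 + Zsqrtd.sqrtd * c 2 ^ 2 - 2 * Zsqrtd.sqrtd * (c 1 * c 3) =
      ⟨e 0 ^ 2 - e 4 ^ 2 - 2 * e 2 * e 6 + 2 * (e 1 * e 7 + e 3 * e 5),
        2 * e 0 * e 4 + e 2 ^ 2 - e 6 ^ 2 - 2 * (e 1 * e 3 - e 5 * e 7)⟩ := by
    ext <;>
    · simp only [c, e, gaussianCoef, Matrix.cons_val, pow_two, Zsqrtd.re_add, Zsqrtd.im_add,
        Zsqrtd.re_sub, Zsqrtd.im_sub, Zsqrtd.re_mul, Zsqrtd.im_mul, Zsqrtd.re_sqrtd,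
        Zsqrtd.im_sqrtd, Zsqrtd.re_ofNat, Zsqrtd.im_ofNat, Nat.cast_ofNat]
      ring
  have sq_coef : 2 * (c 0 * c 2) - c 1 ^ 2 - Zsqrtd.sqrtd * c 3 ^ 2 =
      ⟨2 * (e 0 * e 2 - e 4 * e 6) - (e 1 ^ 2 - e 5 ^ 2) + 2 * e 3 * e 7,
        2 * (e 0 * e 6 + e 2 * e 4) - 2 * e 1 * e 5 - (e 3 ^ 2 - e 7 ^ 2)⟩ := by
    ext <;>
    · simp only [c, e, gaussianCoef, Matrix.cons_val, pow_two, Zsqrtd.re_sub, Zsqrtd.im_sub,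
        Zsqrtd.re_mul, Zsqrtd.im_mul, Zsqrtd.re_sqrtd, Zsqrtd.im_sqrtd, Zsqrtd.re_ofNat,
        Zsqrtd.im_ofNat, Nat.cast_ofNat]
      ring
  rw [quarticNorm, const_coef, sq_coef, sq_sub_sqrtd_mul_sq]
  ext <;>
  · simp only [e, alpha1ReInt, alpha1ImInt]
    ring

theorem sum_mul_pow_eq_sum_ecoef {R : Type*} [Ring R] {z : R} (hz : z ^ 8 = -1)
    (a : Fin 16 → ℤ) :
    ∑ k, (a k : R) * z ^ (k : ℕ) =
      ∑ k : Fin 8, (ecoef a (Fin.castAdd 8 k) : R) * z ^ (k : ℕ) := by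
  have natAdd_eq : ∀ k : Fin 8, (Fin.natAdd 8 k : Fin 16) = Fin.castAdd 8 k + 8 := by decide
  rw [sum_mul_pow_fin_add_self 8 (fun k => (a k : R)) z]
  refine sum_congr rfl fun k _ => ?_
  rw [hz, natAdd_eq, ecoef, mul_neg_one, ← sub_eq_add_neg, Int.cast_sub]

section EighthRootOfNegOne

variable {R : Type*} [CommRing R]

theorem sum_mul_pow_eq_cubic (i : { r : R // r * r = ((-1 : ℤ) : R) }) {z : R} (hz : z ^ 4 = i)
    (a : Fin 16 → ℤ) :
    ∑ k, (a k : R) * z ^ (k : ℕ) =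
      ∑ k, (Zsqrtd.lift i ∘ gaussianCoef a) k * z ^ (k : ℕ) := by
  have hz8 : z ^ 8 = -1 := by
    calc z ^ 8 = z ^ 4 * z ^ 4 := by ring
      _ = -1 := by rw [hz, i.2, Int.cast_neg, Int.cast_one]
  rw [sum_mul_pow_eq_sum_ecoef hz8,
    sum_mul_pow_fin_add_self 4 (fun k : Fin 8 => (ecoef a (Fin.castAdd 8 k) : R)), hz]
  simp only [Fin.sum_univ_four]
  rfl

theorem alpha1_re_im_general {z : R} (hz : z ^ 8 = -1) (a : Fin 16 → ℤ) :
    ∏ j : Fin 4, ∑ k, (a k : R) * (z ^ (4 * (j : ℕ) + 1)) ^ (k : ℕ) =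
      alpha1ReInt a + alpha1ImInt a * z ^ 4 := by
  let i : { r : R // r * r = ((-1 : ℤ) : R) } := ⟨z ^ 4, by rw [← pow_add, hz]; simp⟩
  let φ : GaussianInt →+* R := Zsqrtd.lift i
  have conjugate_pow_four (j : ℕ) : (z ^ (4 * j + 1)) ^ 4 = z ^ 4 := by
    calc (z ^ (4 * j + 1)) ^ 4 = ((z ^ 8) ^ 2) ^ j * z ^ 4 := by ring
      _ = z ^ 4 := by rw [hz, neg_one_sq, one_pow, one_mul]
  have cubic_eq (j : ℕ) : ∑ k, (a k : R) * (z ^ (4 * j + 1)) ^ (k : ℕ) =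
      ∑ k, (φ ∘ gaussianCoef a) k * (z ^ (4 * j + 1)) ^ (k : ℕ) :=
    sum_mul_pow_eq_cubic i (conjugate_pow_four j) a
  have hz5 : (z ^ 5) ^ 2 = -z ^ 2 := by linear_combination z ^ 2 * hz
  have hz9 : z ^ 9 = -z := by linear_combination z * hz
  have hz13 : z ^ 13 = -z ^ 5 := by linear_combination z ^ 5 * hz
  calc ∏ j : Fin 4, ∑ k, (a k : R) * (z ^ (4 * (j : ℕ) + 1)) ^ (k : ℕ)
    _ = quarticNorm (z ^ 4) (φ ∘ gaussianCoef a) := by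
      simp only [cubic_eq]
      rw [← prod_cubic_conjugates_eq_quarticNorm rfl hz5, ← hz9, ← hz13, Fin.prod_univ_four]
      simp only [Fin.coe_ofNat_eq_mod, Nat.reduceMod, Nat.reduceMul, Nat.reduceAdd, pow_one]
      ring
    _ = φ (quarticNorm Zsqrtd.sqrtd (gaussianCoef a)) := by
      have map_sqrtd : φ Zsqrtd.sqrtd = z ^ 4 := by simp [φ, i]
      rw [map_quarticNorm, map_sqrtd]
    _ = alpha1ReInt a + alpha1ImInt a * z ^ 4 := by
      rw [quarticNorm_gaussianCoef]
      rfl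

end EighthRootOfNegOne

theorem zeta16_pow_four : zeta16 ^ 4 = I := by
  calc zeta16 ^ 4 = exp (Real.pi / 2 * I) := by
        rw [zeta16, ← exp_nat_mul]
        congr 1
        push_cast
        ring
    _ = I := exp_pi_div_two_mul_I

theorem prod_fpoly_zeta16_eq (a : Fin 16 → ℤ) :
    fpoly a zeta16 * fpoly a (zeta16 ^ 5) * fpoly a (zeta16 ^ 9) * fpoly a (zeta16 ^ 13) =
      alpha1ReInt a + alpha1ImInt a * I := by
  simpa [fpoly, Fin.prod_univ_four, zeta16_pow_four] using alpha1_re_im_general zeta16_pow_eight a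

theorem alpha1_re_im (a : Fin 16 → ℤ) :
    (fpoly a zeta16 * fpoly a (zeta16 ^ 5) * fpoly a (zeta16 ^ 9) * fpoly a (zeta16 ^ 13)).re
        = (alpha1ReInt a : ℝ) ∧
    (fpoly a zeta16 * fpoly a (zeta16 ^ 5) * fpoly a (zeta16 ^ 9) * fpoly a (zeta16 ^ 13)).im
        = (alpha1ImInt a : ℝ) := by
  rw [prod_fpoly_zeta16_eq]
  constructor <;> simp
end

section
/- For integers a_0, …, a_15, the integers N_1, N_2, N_4, N_8 and N_16 are all congruent to one another modulo 2. -/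
open Complex Finset

/-!
A root of unity `ζ` with `ζ ^ (p ^ n) = 1` reduces to `1` in every field of characteristic `p`,
because there `ζ ^ (p ^ n) - 1 = (ζ - 1) ^ (p ^ n)`. A ring of algebraic integers maps to such a
field, so a rational integer that is a product of `m` values of `f ∈ ℤ[X]` at powers of `ζ` is
congruent to `f(1) ^ m` modulo `p`. For `p = 2` and `m ≠ 0` this is `f(1)`, whatever `m` is.
-/

section Reduction

open Polynomial

universe u

variable {p : ℕ} [Fact p.Prime]

variable (p) in
theorem exists_field_charP_ringHom_of_isIntegral_int (A : Type u) [CommRing A] [CharZero A]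
    [Algebra.IsIntegral ℤ A] :
    ∃ (K : Type u) (_ : Field K) (_ : CharP K p), Nonempty (A →+* K) := by
  obtain ⟨M, hM, hMp⟩ :=
    Ideal.exists_maximal_ideal_liesOver_of_isIntegral (S := A) (Ideal.span {(p : ℤ)})
  let _ : Field (A ⧸ M) := Ideal.Quotient.field M
  have p_mem : algebraMap ℤ A p ∈ M :=
    (M.mem_of_liesOver (Ideal.span {(p : ℤ)}) p).mp (Ideal.mem_span_singleton_self _)
  have p_eq_zero : (p : A ⧸ M) = 0 := by
    simpa using Ideal.Quotient.eq_zero_iff_mem.mpr p_mem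
  exact ⟨A ⧸ M, inferInstance, (CharP.charP_iff_prime_eq_zero Fact.out).mpr p_eq_zero,
    ⟨Ideal.Quotient.mk M⟩⟩

theorem aeval_eq_eval_one_of_pow_prime_pow_eq_one {K : Type*} [CommRing K] [IsReduced K]
    [CharP K p] {n : ℕ} {x : K} (hx : x ^ p ^ n = 1) (f : ℤ[X]) :
    aeval x f = (f.eval 1 : ℤ) := by
  have hx_one : x = 1 := by
    simpa using (ExpChar.pow_prime_pow_mul_eq_one_iff p n 1 x).mp (by rwa [mul_one])
  simpa [hx_one] using aeval_algebraMap_apply_eq_algebraMap_eval (A := K) (1 : ℤ) f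

theorem modEq_eval_one_pow_card_of_eq_prod_aeval {R ι : Type*} [CommRing R] [CharZero R] {n : ℕ}
    {z : ι → R} (hz : ∀ i, z i ^ p ^ n = 1) (f : ℤ[X]) {s : Finset ι} {N : ℤ}
    (hN : (N : R) = ∏ i ∈ s, aeval (z i) f) : N ≡ f.eval 1 ^ #s [ZMOD p] := by
  have hz_int (i : ι) : IsIntegral ℤ (z i) :=
    .of_pow (Nat.pow_pos (Fact.out : p.Prime).pos) (hz i ▸ isIntegral_one)
  let w (i : ι) : integralClosure ℤ R := ⟨z i, hz_int i⟩
  have hw (i : ι) : w i ^ p ^ n = 1 := Subtype.ext (hz i)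
  have hNw : (N : integralClosure ℤ R) = ∏ i ∈ s, aeval (w i) f :=
    Subtype.ext <| by simpa [w, ← Subalgebra.aeval_coe] using hN
  obtain ⟨K, _, _, ⟨φ⟩⟩ := exists_field_charP_ringHom_of_isIntegral_int p (integralClosure ℤ R)
  refine (CharP.intCast_eq_intCast K p).mp ?_
  calc (N : K) = ∏ i ∈ s, φ (aeval (w i) f) := by rw [← map_prod, ← hNw, map_intCast]
    _ = ∏ i ∈ s, aeval (φ (w i)) f :=
      prod_congr rfl fun i _ ↦ (aeval_algHom_apply φ.toIntAlgHom (w i) f).symm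
    _ = ∏ _i ∈ s, ((f.eval 1 : ℤ) : K) := prod_congr rfl fun i _ ↦
      aeval_eq_eval_one_of_pow_prime_pow_eq_one (by rw [← map_pow, hw, map_one]) f
    _ = ((f.eval 1 ^ #s : ℤ) : K) := by rw [prod_const, Int.cast_pow]

end Reduction

theorem pow_modEq_self_mod_two (x : ℤ) {m : ℕ} (hm : m ≠ 0) : x ^ m ≡ x [ZMOD 2] := by
  rw [Int.modEq_comm, Int.modEq_iff_dvd, ← even_iff_two_dvd, Int.even_sub, Int.even_pow' hm]

section GcdProd

open Polynomial

variable {R : Type*} [CommRing R]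

/-- For an `m`-th root of unity `ζ`, the product `N_d` of the values `f(ζ ^ l)` over the residues
`l` modulo `m` with `gcd(l, m) = d`. The residue `0` is the one counted for `d = m`. -/
noncomputable def gcdProd (f : ℤ[X]) (ζ : R) (m d : ℕ) : R :=
  ∏ l ∈ range m with l.gcd m = d, aeval (ζ ^ l) f

theorem modEq_eval_one_pow_totient_of_eq_gcdProd [CharZero R] {p n d : ℕ} [Fact p.Prime] {ζ : R}
    (hζ : ζ ^ p ^ n = 1) (f : ℤ[X]) (hd : d ∣ p ^ n) {N : ℤ}
    (hN : (N : R) = gcdProd f ζ (p ^ n) d) :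
    N ≡ f.eval 1 ^ (p ^ n / d).totient [ZMOD p] := by
  have hζ_pow (l : ℕ) : (ζ ^ l) ^ p ^ n = 1 := by rw [pow_right_comm, hζ, one_pow]
  simpa only [Nat.totient_div_of_dvd hd, Nat.gcd_comm] using
    modEq_eval_one_pow_card_of_eq_prod_aeval hζ_pow f hN

theorem modEq_eval_one_mod_two_of_eq_gcdProd [CharZero R] {n d : ℕ} {ζ : R}
    (hζ : ζ ^ 2 ^ n = 1) (f : ℤ[X]) (hd : d ∣ 2 ^ n) {N : ℤ}
    (hN : (N : R) = gcdProd f ζ (2 ^ n) d) : N ≡ f.eval 1 [ZMOD 2] := by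
  have d_ne_zero : d ≠ 0 := ne_zero_of_dvd_ne_zero (by positivity) hd
  have quotient_ne_zero : 2 ^ n / d ≠ 0 :=
    (Nat.div_ne_zero_iff_of_dvd hd).mpr ⟨by positivity, d_ne_zero⟩
  exact (modEq_eval_one_pow_totient_of_eq_gcdProd hζ f hd hN).trans
    (pow_modEq_self_mod_two _ (Nat.totient_pos.mpr quotient_ne_zero.bot_lt).ne')

theorem Nd_congruent_mod_two_general [CharZero R] {n : ℕ} {ζ : R} (hζ : ζ ^ 2 ^ n = 1) (f : ℤ[X])
    {d d' : ℕ} (hd : d ∣ 2 ^ n) (hd' : d' ∣ 2 ^ n) {N N' : ℤ}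
    (hN : (N : R) = gcdProd f ζ (2 ^ n) d) (hN' : (N' : R) = gcdProd f ζ (2 ^ n) d') :
    N ≡ N' [ZMOD 2] :=
  (modEq_eval_one_mod_two_of_eq_gcdProd hζ f hd hN).trans
    (modEq_eval_one_mod_two_of_eq_gcdProd hζ f hd' hN').symm

end GcdProd

theorem zeta16_pow_two_pow_four : zeta16 ^ 2 ^ 4 = 1 :=
  (Complex.isPrimitiveRoot_exp 16 (by norm_num)).pow_eq_one

theorem fpoly_eq_aeval_ofFn (a : Fin 16 → ℤ) (x : ℂ) :
    fpoly a x = Polynomial.aeval x (Polynomial.ofFn 16 a) := by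
  simp [fpoly, Polynomial.ofFn_eq_sum_monomial, Polynomial.aeval_monomial]

theorem Nprod_eq_gcdProd (a : Fin 16 → ℤ) (d : ℕ) :
    Nprod a d = gcdProd (Polynomial.ofFn 16 a) zeta16 (2 ^ 4) d :=
  prod_congr rfl fun _ _ ↦ fpoly_eq_aeval_ofFn a _

theorem Nd_congruent_mod_two (a : Fin 16 → ℤ)
    (N1 N2 N4 N8 N16 : ℤ)
    (h1 : (N1 : ℂ) = Nprod a 1) (h2 : (N2 : ℂ) = Nprod a 2) (h4 : (N4 : ℂ) = Nprod a 4)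
    (h8 : (N8 : ℂ) = Nprod a 8) (h16 : (N16 : ℂ) = Nprod a 16) :
    N1 ≡ N2 [ZMOD 2] ∧ N2 ≡ N4 [ZMOD 2] ∧ N4 ≡ N8 [ZMOD 2] ∧ N8 ≡ N16 [ZMOD 2] := by
  rw [Nprod_eq_gcdProd] at h1 h2 h4 h8 h16
  have hζ := zeta16_pow_two_pow_four
  refine ⟨Nd_congruent_mod_two_general hζ _ ?_ ?_ h1 h2,
    Nd_congruent_mod_two_general hζ _ ?_ ?_ h2 h4, Nd_congruent_mod_two_general hζ _ ?_ ?_ h4 h8,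
    Nd_congruent_mod_two_general hζ _ ?_ ?_ h8 h16⟩ <;> norm_num
end

section
/- For integers a_0, …, a_15, the product N_4 · N_8 · N_16 is either odd or divisible by 16. -/
open Complex Finset

/-!
Fourth roots of unity only see `f` modulo `x ^ 4 - 1`, that is `b₀ + b₁ x + b₂ x² + b₃ x³` with
`bₖ = bcoef a k`. So with `p = b₀ + b₂`, `q = b₁ + b₃`, `u = b₀ - b₂`, `v = b₁ - b₃` the norms are
`N₁₆ = f(1) = p + q`, `N₈ = f(-1) = p - q` and `N₄ = f(i) f(-i) = u² + v²`. As `u ≡ p` and `v ≡ q`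
modulo 2, all three norms have the same parity. If they are even, then either `p, q` are both even,
and `4 ∣ u² + v²`, `4 ∣ p² - q²`; or both are odd, and `2 ∣ u² + v²`, `8 ∣ p² - q²`.
-/

theorem sum_mul_pow_of_pow_eq_one {R : Type*} [Semiring R] {m n : ℕ} (c : Fin (m * n) → R) {x : R}
    (hx : x ^ n = 1) :
    ∑ k, c k * x ^ (k : ℕ) =
      ∑ j : Fin n, (∑ i : Fin m, c (finProdFinEquiv (i, j))) * x ^ (j : ℕ) := by
  have pow_index (i : Fin m) (j : Fin n) :
      x ^ (finProdFinEquiv (i, j) : ℕ) = x ^ (j : ℕ) := by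
    rw [finProdFinEquiv_apply_val, pow_add, pow_mul, hx, one_pow, mul_one]
  calc ∑ k, c k * x ^ (k : ℕ)
      = ∑ i, ∑ j, c (finProdFinEquiv (i, j)) * x ^ (finProdFinEquiv (i, j) : ℕ) := by
        rw [← finProdFinEquiv.sum_comp, Fintype.sum_prod_type]
    _ = ∑ j, (∑ i, c (finProdFinEquiv (i, j))) * x ^ (j : ℕ) := by
        simp only [pow_index, sum_mul]
        exact sum_comm

theorem zeta16_pow_twelve : zeta16 ^ 12 = -I := by
  rw [show 12 = 4 * 3 from rfl, pow_mul, zeta16_pow_four, I_pow_three]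

theorem Nprod_sixteen (a : Fin 16 → ℤ) :
    Nprod a 16 = ((bcoef a 0 + bcoef a 2) + (bcoef a 1 + bcoef a 3) : ℤ) := by
  have indices : {l ∈ range 16 | Nat.gcd l 16 = 16} = {0} := by decide
  rw [Nprod, indices, prod_singleton, pow_zero, fpoly_eq_of_pow_four_eq_one a (one_pow 4)]
  push_cast
  ring

theorem Nprod_eight (a : Fin 16 → ℤ) :
    Nprod a 8 = ((bcoef a 0 + bcoef a 2) - (bcoef a 1 + bcoef a 3) : ℤ) := by
  have indices : {l ∈ range 16 | Nat.gcd l 16 = 8} = {8} := by decide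
  rw [Nprod, indices, prod_singleton, zeta16_pow_eight, fpoly_eq_of_pow_four_eq_one a (by norm_num)]
  push_cast
  ring

theorem Nprod_four (a : Fin 16 → ℤ) :
    Nprod a 4 = ((bcoef a 0 - bcoef a 2) ^ 2 + (bcoef a 1 - bcoef a 3) ^ 2 : ℤ) := by
  have indices : {l ∈ range 16 | Nat.gcd l 16 = 4} = {4, 12} := by decide
  have fpoly_I : fpoly a I = (bcoef a 0 - bcoef a 2) + (bcoef a 1 - bcoef a 3) * I := by
    rw [fpoly_eq_of_pow_four_eq_one a I_pow_four, I_sq, I_pow_three]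
    ring
  have fpoly_neg_I : fpoly a (-I) = (bcoef a 0 - bcoef a 2) - (bcoef a 1 - bcoef a 3) * I := by
    rw [fpoly_eq_of_pow_four_eq_one a (by rw [Even.neg_pow (by decide), I_pow_four]), neg_sq, I_sq,
      Odd.neg_pow (by decide), I_pow_three]
    ring
  rw [Nprod, indices, prod_pair (by decide), zeta16_pow_four, zeta16_pow_twelve, fpoly_I,
    fpoly_neg_I, ← sq_sub_sq, mul_pow, I_sq]
  push_cast
  ring

theorem four_dvd_sq_of_even {n : ℤ} (hn : Even n) : 4 ∣ n ^ 2 :=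
  pow_dvd_pow_of_dvd hn.two_dvd 2

theorem eight_dvd_sq_sub_sq_of_odd {m n : ℤ} (hm : Odd m) (hn : Odd n) : 8 ∣ m ^ 2 - n ^ 2 := by
  simpa only [sub_sub_sub_cancel_right] using
    dvd_sub (Int.eight_dvd_sq_sub_one_of_odd hm) (Int.eight_dvd_sq_sub_one_of_odd hn)

theorem odd_or_sixteen_dvd_sq_add_sq_mul_sq_sub_sq {u v p q : ℤ} (hu : Even u ↔ Even p)
    (hv : Even v ↔ Even q) :
    Odd ((u ^ 2 + v ^ 2) * (p ^ 2 - q ^ 2)) ∨ 16 ∣ (u ^ 2 + v ^ 2) * (p ^ 2 - q ^ 2) := by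
  by_cases hp : Even p <;> by_cases hq : Even q
  · right
    exact mul_dvd_mul
      (dvd_add (four_dvd_sq_of_even (hu.2 hp)) (four_dvd_sq_of_even (hv.2 hq)))
      (dvd_sub (four_dvd_sq_of_even hp) (four_dvd_sq_of_even hq))
  · left
    simp [← Int.not_even_iff_odd, hu, hv, hp, hq, parity_simps]
  · left
    simp [← Int.not_even_iff_odd, hu, hv, hp, hq, parity_simps]
  · right
    have even_sq_add_sq : Even (u ^ 2 + v ^ 2) := by
      simp [hu, hv, hp, hq, parity_simps]
    exact mul_dvd_mul even_sq_add_sq.two_dvd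
      (eight_dvd_sq_sub_sq_of_odd (Int.not_even_iff_odd.1 hp) (Int.not_even_iff_odd.1 hq))

theorem N4_N8_N16_odd_or_sixteen_dvd (a : Fin 16 → ℤ)
    (N4 N8 N16 : ℤ)
    (h4 : (N4 : ℂ) = Nprod a 4) (h8 : (N8 : ℂ) = Nprod a 8) (h16 : (N16 : ℂ) = Nprod a 16) :
    Odd (N4 * N8 * N16) ∨ (16 : ℤ) ∣ N4 * N8 * N16 := by
  rw [Nprod_four, Int.cast_inj] at h4
  rw [Nprod_eight, Int.cast_inj] at h8
  rw [Nprod_sixteen, Int.cast_inj] at h16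
  have product_eq : N4 * N8 * N16 =
      ((bcoef a 0 - bcoef a 2) ^ 2 + (bcoef a 1 - bcoef a 3) ^ 2) *
        ((bcoef a 0 + bcoef a 2) ^ 2 - (bcoef a 1 + bcoef a 3) ^ 2) := by
    rw [h4, h8, h16]
    ring
  rw [product_eq]
  exact odd_or_sixteen_dvd_sq_add_sq_mul_sq_sub_sq
    (by simp only [Int.even_sub, Int.even_add]) (by simp only [Int.even_sub, Int.even_add])
end
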